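/- Let ε_1,…,ε_m be i.i.d. standard normal random variables independent of the data X_1ⁿ = {X_1,…,X_n}. Suppose there exist constants 0 < c₁ ≤ C₁ and 0 < c₂ < 1/2 such that c₁ ≤ σ̲²(q) ≤ σ̄²(q) ≤ C₁ and q·D_n·log^{5/2} p ≤ C₁·n^{1/2−c₂}. Then there exist constants c, c', C, C' > 0 depending only on c₁, c₂, C₁ such that, with probability at least 1 − C·n^{−c} − (m−1)·b_r, one has sup_{t∈ℝ} | Pr( max_{1≤j≤p} (mq)^{−1/2} Σ_{l=1}^m ε_l·S_{lj} ≤ t | X_1ⁿ ) − Pr( max_{1≤j≤p} Y̌_j ≤ t ) | ≤ C'·n^{−c'}. -/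

import Mathlib

/-!
Why the block multiplier bootstrap is valid.

Given the data, the bootstrap statistic is the maximum of a centred Gaussian vector with covariance
`Σ̂ = (mq)⁻¹ ∑ S_l S_lᵀ`, and `max_j Y̌_j` is the maximum of a centred Gaussian vector with covariance
`Σ = blockCov`. The proof compares the two laws in terms of `Δ = max_{j,k} |Σ̂_{jk} - Σ_{jk}|` and
shows that `Δ` is small with high probability.

*Gaussian comparison* (`ks_bound`). The indicator of `max_j y_j ≤ t` is replaced by a smooth function
of the soft maximum `β⁻¹ log ∑ exp (β y_j)`. Slepian interpolation between the two Gaussian vectors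
(`slepian`, through Gaussian integration by parts) bounds the difference of the smoothed
probabilities by `Δ` times second derivatives, which gives the term `Δ log p / ε²`. Passing back to
the indicator costs the probability that `max_j Y̌_j` lies in an interval of length `ε`; by
`anti_concentration`, valid because the variances lie in `[c₁, C₁]`, this is of order `ε √(log p)`.

*Decoupling* (`beta_blocks`, `decouple`). On open sets, the joint law of the `m` large blocks exceeds
the product of its marginals by at most `(m - 1) b_r`. Blocks are separated one at a time; each step
exhausts the open set by finite unions of rectangles, for which the partition definition of the
`β`-coefficient applies to the generated atoms.

*Concentration* (`bernstein`, `cov_deviation`, `good_event`). Under the product law, the entries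
`S_{lj} S_{lk}` are bounded by `(q D)²` with second moment at most `(q D)² q C₁`, so Bernstein's
inequality and a union bound over `p²` entries give `Δ ≤ A n^{-c₂/4} / log² p` with probability at
least `1 - n^{-c₂/4}`.

On this event the choice `ε = n^{-c₂/12} / √(log p)` makes the comparison bound a multiple of
`n^{-c₂/12}`, so `c = c₂/4` and `c' = c₂/12` work.
-/

/-!
Formalization of results from "Testing Many Moment Inequalities"
(Chernozhukov, Chetverikov, Kato).

We model an i.i.d. sample `X_1, …, X_n` of random vectors in `ℝ^p` with common
distribution `Q` by the coordinate process on the product space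
`Fin n → (Fin p → ℝ)` equipped with the product measure `sampLaw n Q`.
Conditional bootstrap quantiles (given the data) are represented by taking, for
each realized sample, the quantile of the corresponding bootstrap statistic
under a fresh product measure (standard Gaussian multipliers for the multiplier
bootstrap, uniform resampling indices for the empirical bootstrap).
-/

open MeasureTheory ProbabilityTheory Filter
open scoped ENNReal NNReal BigOperators Classical

noncomputable section

namespace ManyMoment

/-- Standard normal CDF `Φ`. -/
def Phi (x : ℝ) : ℝ := ((gaussianReal 0 1) (Set.Iic x)).toReal

/-- Standard normal quantile function `Φ⁻¹`. -/
def PhiInv (a : ℝ) : ℝ := sInf {x : ℝ | a ≤ Phi x}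

/-- One-step self-normalized (SN) critical value `c^{SN}(a)`. -/
def cSN (n p : ℕ) (a : ℝ) : ℝ :=
  PhiInv (1 - a / (p : ℝ)) / Real.sqrt (1 - PhiInv (1 - a / (p : ℝ)) ^ 2 / (n : ℝ))

/-- Product of `n` standard Gaussian distributions (law of the multipliers). -/
def gaussPi (n : ℕ) : Measure (Fin n → ℝ) := Measure.pi fun _ => gaussianReal 0 1

/-- Product of `n` uniform distributions on `Fin n` (law of resampling indices). -/
def unifPi (n : ℕ) : Measure (Fin n → Fin n) :=
  Measure.pi fun _ => (n : ℝ≥0∞)⁻¹ • Measure.count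

variable {ι : Type*} [Fintype ι]

/-- Sample mean `μ̂_j`. -/
def muHatD (n : ℕ) (d : Fin n → ι → ℝ) (j : ι) : ℝ := (∑ i, d i j) / (n : ℝ)

/-- Sample standard deviation `σ̂_j`. -/
def sigmaHatD (n : ℕ) (d : Fin n → ι → ℝ) (j : ι) : ℝ :=
  Real.sqrt ((∑ i, (d i j - muHatD n d j) ^ 2) / (n : ℝ))

/-- The test statistic `T = max_j √n μ̂_j / σ̂_j`. -/
def TstatD (n : ℕ) (d : Fin n → ι → ℝ) : ℝ :=
  ⨆ j : ι, Real.sqrt n * muHatD n d j / sigmaHatD n d j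

/-- Multiplier bootstrap statistic `W^{MB}` (as a function of the multipliers `e`). -/
def WMBD (n : ℕ) (d : Fin n → ι → ℝ) (e : Fin n → ℝ) : ℝ :=
  ⨆ j : ι, Real.sqrt n * ((∑ i, e i * (d i j - muHatD n d j)) / (n : ℝ)) / sigmaHatD n d j

/-- One-step multiplier bootstrap critical value: conditional `(1-a)`-quantile of `W^{MB}`
given the data `d`. -/
def cMBD (n : ℕ) (d : Fin n → ι → ℝ) (a : ℝ) : ℝ :=
  sInf {t : ℝ | 1 - a ≤ (gaussPi n {e | WMBD n d e ≤ t}).toReal}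

/-- Empirical bootstrap statistic `W^{EB}` (as a function of the resampling indices `k`). -/
def WEBD (n : ℕ) (d : Fin n → ι → ℝ) (k : Fin n → Fin n) : ℝ :=
  ⨆ j : ι, Real.sqrt n * ((∑ i, (d (k i) j - muHatD n d j)) / (n : ℝ)) / sigmaHatD n d j

/-- One-step empirical bootstrap critical value: conditional `(1-a)`-quantile of `W^{EB}`
given the data `d`. -/
def cEBD (n : ℕ) (d : Fin n → ι → ℝ) (a : ℝ) : ℝ :=
  sInf {t : ℝ | 1 - a ≤ (unifPi n {k | WEBD n d k ≤ t}).toReal}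

/-- Multiplier bootstrap statistic restricted to a set `J` of inequalities (0 if `J = ∅`). -/
def WMBDsel (n : ℕ) (J : Finset ι) (d : Fin n → ι → ℝ) (e : Fin n → ℝ) : ℝ :=
  if h : J.Nonempty then
    J.sup' h fun j => Real.sqrt n * ((∑ i, e i * (d i j - muHatD n d j)) / (n : ℝ)) / sigmaHatD n d j
  else 0

/-- Empirical bootstrap statistic restricted to a set `J` of inequalities (0 if `J = ∅`). -/
def WEBDsel (n : ℕ) (J : Finset ι) (d : Fin n → ι → ℝ) (k : Fin n → Fin n) : ℝ :=
  if h : J.Nonempty then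
    J.sup' h fun j => Real.sqrt n * ((∑ i, (d (k i) j - muHatD n d j)) / (n : ℝ)) / sigmaHatD n d j
  else 0

/-- Conditional `lvl`-quantile of the restricted multiplier bootstrap statistic. -/
def quantMBsel (n : ℕ) (J : Finset ι) (d : Fin n → ι → ℝ) (lvl : ℝ) : ℝ :=
  sInf {t : ℝ | lvl ≤ (gaussPi n {e | WMBDsel n J d e ≤ t}).toReal}

/-- Conditional `lvl`-quantile of the restricted empirical bootstrap statistic. -/
def quantEBsel (n : ℕ) (J : Finset ι) (d : Fin n → ι → ℝ) (lvl : ℝ) : ℝ :=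
  sInf {t : ℝ | lvl ≤ (unifPi n {k | WEBDsel n J d k ≤ t}).toReal}

/-- The SN-selected set `Ĵ_{SN} = {j : √n μ̂_j/σ̂_j > -2 c^{SN}(b)}`. -/
def JhatSN (n p : ℕ) (b : ℝ) (d : Fin n → Fin p → ℝ) : Finset (Fin p) :=
  Finset.univ.filter fun j =>
    -2 * cSN n p b < Real.sqrt n * muHatD n d j / sigmaHatD n d j

/-- `k̂ = |Ĵ_{SN}|`. -/
def khat (n p : ℕ) (b : ℝ) (d : Fin n → Fin p → ℝ) : ℕ := (JhatSN n p b d).card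

/-- Two-step SN critical value `c^{SN,2S}(a)` (with selection at level `b`). -/
def cSN2S (n p : ℕ) (a b : ℝ) (d : Fin n → Fin p → ℝ) : ℝ :=
  if khat n p b d = 0 then 0
  else
    PhiInv (1 - (a - 2 * b) / (khat n p b d : ℝ)) /
      Real.sqrt (1 - PhiInv (1 - (a - 2 * b) / (khat n p b d : ℝ)) ^ 2 / (n : ℝ))

/-- The MB-selected set `Ĵ_{MB} = {j : √n μ̂_j/σ̂_j > -2 c^{MB}(b)}`. -/
def JhatMB (n : ℕ) (b : ℝ) (d : Fin n → ι → ℝ) : Finset ι :=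
  Finset.univ.filter fun j =>
    -2 * cMBD n d b < Real.sqrt n * muHatD n d j / sigmaHatD n d j

/-- The EB-selected set `Ĵ_{EB} = {j : √n μ̂_j/σ̂_j > -2 c^{EB}(b)}`. -/
def JhatEB (n : ℕ) (b : ℝ) (d : Fin n → ι → ℝ) : Finset ι :=
  Finset.univ.filter fun j =>
    -2 * cEBD n d b < Real.sqrt n * muHatD n d j / sigmaHatD n d j

/-- Two-step multiplier bootstrap critical value `c^{MB,2S}(a)`:
conditional `(1-a+2b)`-quantile of the restricted MB statistic. -/
def cMB2S (n : ℕ) (a b : ℝ) (d : Fin n → ι → ℝ) : ℝ :=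
  quantMBsel n (JhatMB n b d) d (1 - a + 2 * b)

/-- Two-step empirical bootstrap critical value `c^{EB,2S}(a)`. -/
def cEB2S (n : ℕ) (a b : ℝ) (d : Fin n → ι → ℝ) : ℝ :=
  quantEBsel n (JhatEB n b d) d (1 - a + 2 * b)

/-- Hybrid MB critical value `c^{MB,H}(a)` (SN selection, MB quantile). -/
def cMBH (n p : ℕ) (a b : ℝ) (d : Fin n → Fin p → ℝ) : ℝ :=
  quantMBsel n (JhatSN n p b d) d (1 - a + 2 * b)

/-- Hybrid EB critical value `c^{EB,H}(a)` (SN selection, EB quantile). -/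
def cEBH (n p : ℕ) (a b : ℝ) (d : Fin n → Fin p → ℝ) : ℝ :=
  quantEBsel n (JhatSN n p b d) d (1 - a + 2 * b)

/-- Population mean `μ_j = E[X_{1j}]` under the common distribution `Q`. -/
def popMean (Q : Measure (ι → ℝ)) (j : ι) : ℝ := ∫ x, x j ∂Q

/-- Population standard deviation `σ_j = (Var X_{1j})^{1/2}`. -/
def popSD (Q : Measure (ι → ℝ)) (j : ι) : ℝ := Real.sqrt (variance (fun x => x j) Q)

/-- Standardized coordinate `Z_{1j} = (X_{1j} - μ_j)/σ_j`. -/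
def Znorm (Q : Measure (ι → ℝ)) (j : ι) (x : ι → ℝ) : ℝ := (x j - popMean Q j) / popSD Q j

/-- `M_{n,k} = max_j (E|Z_{1j}|^k)^{1/k}`. -/
def Mnk (Q : Measure (ι → ℝ)) (k : ℕ) : ℝ :=
  ⨆ j : ι, (∫ x, |Znorm Q j x| ^ k ∂Q) ^ ((k : ℝ)⁻¹)

/-- `B_n = (E[max_j Z_{1j}^4])^{1/4}`. -/
def Bn4 (Q : Measure (ι → ℝ)) : ℝ :=
  (∫ x, ⨆ j : ι, Znorm Q j x ^ 4 ∂Q) ^ ((4 : ℝ)⁻¹)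

/-- Law of an i.i.d. sample of size `n` drawn from `Q`. -/
def sampLaw (n : ℕ) (Q : Measure (ι → ℝ)) : Measure (Fin n → ι → ℝ) :=
  Measure.pi fun _ => Q

end ManyMoment

namespace ManyMoment

/-! ### Dependent data: blocks, mixing coefficients, block multiplier bootstrap

The sample `X_1,…,X_n` (possibly dependent, identically distributed) is modeled as the
coordinate process on `Fin n → (Fin p → ℝ)` under a joint law `Pm`. -/

/-- Sum of the coordinates `X_{ij}`, `i ∈ {a+1,…,a+q}` (0-based: `a ≤ i < a+q`). -/
def blockSum (n p : ℕ) (a q : ℕ) (j : Fin p) (ω : Fin n → Fin p → ℝ) : ℝ :=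
  ∑ i : Fin n, if a ≤ (i : ℕ) ∧ (i : ℕ) < a + q then ω i j else 0

/-- `σ̄²(q) = max_j max_I Var(q^{-1/2} Σ_{i∈I} X_{ij})` over blocks `I` of length `q`. -/
def sigmaBarSq (n p : ℕ) (Pm : Measure (Fin n → Fin p → ℝ)) (q : ℕ) : ℝ :=
  ⨆ j : Fin p, ⨆ a : Fin (n - q + 1),
    variance (fun ω => blockSum n p (a : ℕ) q j ω / Real.sqrt q) Pm

/-- `σ̲²(q) = min_j min_I Var(q^{-1/2} Σ_{i∈I} X_{ij})` over blocks `I` of length `q`. -/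
def sigmaLowSq (n p : ℕ) (Pm : Measure (Fin n → Fin p → ℝ)) (q : ℕ) : ℝ :=
  ⨅ j : Fin p, ⨅ a : Fin (n - q + 1),
    variance (fun ω => blockSum n p (a : ℕ) q j ω / Real.sqrt q) Pm

/-- The `β`-dependence coefficient between two sub-σ-fields: half the supremum over finite
measurable partitions of `Σ_i Σ_j |Pm(A_i ∩ B_j) - Pm(A_i)Pm(B_j)|`. -/
def betaDep {Ω : Type*} [MeasurableSpace Ω] (Pm : Measure Ω)
    (m₁ m₂ : MeasurableSpace Ω) : ℝ :=
  (1 / 2) * sSup {x : ℝ |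
    ∃ (I J : ℕ) (A : Fin I → Set Ω) (B : Fin J → Set Ω),
      (∀ i, MeasurableSet[m₁] (A i)) ∧ Pairwise (Function.onFun Disjoint A) ∧
      (⋃ i, A i) = Set.univ ∧
      (∀ j, MeasurableSet[m₂] (B j)) ∧ Pairwise (Function.onFun Disjoint B) ∧
      (⋃ j, B j) = Set.univ ∧
      x = ∑ i, ∑ j, |(Pm (A i ∩ B j)).toReal - (Pm (A i)).toReal * (Pm (B j)).toReal|}

/-- σ-field generated by the coordinates `X_i`, `i < l` (0-based), i.e. `σ(X_1,…,X_l)`. -/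
def sigmaUpTo (n p : ℕ) (l : ℕ) : MeasurableSpace (Fin n → Fin p → ℝ) :=
  ⨆ i : Fin n, ⨆ _ : (i : ℕ) < l, MeasurableSpace.comap (fun ω => ω i) inferInstance

/-- σ-field generated by the coordinates `X_i`, `i ≥ a` (0-based). -/
def sigmaFrom (n p : ℕ) (a : ℕ) : MeasurableSpace (Fin n → Fin p → ℝ) :=
  ⨆ i : Fin n, ⨆ _ : a ≤ (i : ℕ), MeasurableSpace.comap (fun ω => ω i) inferInstance

/-- The `k`-th `β`-mixing coefficient
`b_k = max_{1 ≤ l ≤ n-k} β(σ(X_1,…,X_l), σ(X_{l+k},…,X_n))`. -/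
def bmix (n p : ℕ) (Pm : Measure (Fin n → Fin p → ℝ)) (k : ℕ) : ℝ :=
  ⨆ l : Fin (n - k),
    betaDep Pm (sigmaUpTo n p ((l : ℕ) + 1)) (sigmaFrom n p ((l : ℕ) + k))

/-- Number of large blocks `m = ⌊n/(q+r)⌋`. -/
def nBlocks (n q r : ℕ) : ℕ := n / (q + r)

/-- Centered large-block sum `Σ_{i ∈ I_l} (X_{ij} - μ̂_j)` for the `l`-th large block. -/
def blockSumC (n p : ℕ) (a q : ℕ) (j : Fin p) (ω : Fin n → Fin p → ℝ) : ℝ :=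
  ∑ i : Fin n, if a ≤ (i : ℕ) ∧ (i : ℕ) < a + q then ω i j - muHatD n ω j else 0

/-- Block multiplier bootstrap statistic
`W̌ = max_j (mq)^{-1/2} Σ_l ε_l Σ_{i∈I_l} (X_{ij} - μ̂_j)` as a function of the
block multipliers `e`. -/
def WBMB (n p q r : ℕ) (ω : Fin n → Fin p → ℝ) (e : Fin (nBlocks n q r) → ℝ) : ℝ :=
  ⨆ j : Fin p,
    (∑ l : Fin (nBlocks n q r), e l * blockSumC n p ((l : ℕ) * (q + r)) q j ω) /
      Real.sqrt ((nBlocks n q r * q : ℕ))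

/-- BMB critical value: conditional `(1-a)`-quantile of `W̌` given the data. -/
def cBMB (n p q r : ℕ) (a : ℝ) (ω : Fin n → Fin p → ℝ) : ℝ :=
  sInf {t : ℝ | 1 - a ≤ (gaussPi (nBlocks n q r) {e | WBMB n p q r ω e ≤ t}).toReal}

/-- Non-Studentized statistic `Ť = max_j √n μ̂_j`. -/
def TcheckD (n p : ℕ) (ω : Fin n → Fin p → ℝ) : ℝ :=
  ⨆ j : Fin p, Real.sqrt n * muHatD n ω j

/-- Covariance matrix `(mq)⁻¹ Σ_l E[S_{lj} S_{lk}]` of the block sums (for mean-zero data),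
the covariance of the approximating Gaussian vector `Y̌`. -/
def blockCov (n p q r : ℕ) (Pm : Measure (Fin n → Fin p → ℝ)) (j k : Fin p) : ℝ :=
  ((nBlocks n q r * q : ℕ) : ℝ)⁻¹ *
    ∑ l : Fin (nBlocks n q r),
      ∫ ω, blockSum n p ((l : ℕ) * (q + r)) q j ω *
            blockSum n p ((l : ℕ) * (q + r)) q k ω ∂Pm

end ManyMoment

namespace ManyMoment

/-- Multiplier block bootstrap statistic `max_j (mq)^{-1/2} Σ_l ε_l S_{lj}` built from the
(uncentered) large-block sums, as a function of the block multipliers `e`. -/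
def WBMBraw (n p q r : ℕ) (ω : Fin n → Fin p → ℝ) (e : Fin (nBlocks n q r) → ℝ) : ℝ :=
  ⨆ j : Fin p,
    (∑ l : Fin (nBlocks n q r), e l * blockSum n p ((l : ℕ) * (q + r)) q j ω) /
      Real.sqrt ((nBlocks n q r * q : ℕ))

/-! ### Standard Gaussian vectors: linear images and integration by parts -/

instance (N : ℕ) : IsProbabilityMeasure (gaussPi N) := by
  unfold gaussPi; infer_instance

/-- The vector `∑ l, ξ l • V l`; for `ξ` standard Gaussian this is the generic centred Gaussian
vector, with covariance `∑ l, V l j * V l k`. -/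
def lin {N p : ℕ} (V : Fin N → Fin p → ℝ) (ξ : Fin N → ℝ) (j : Fin p) : ℝ := ∑ l, ξ l * V l j

lemma continuous_lin {N p : ℕ} (V : Fin N → Fin p → ℝ) : Continuous (lin V) := by
  unfold lin; fun_prop

lemma gaussPi_map_sum {N : ℕ} (w : Fin N → ℝ) :
    Measure.map (fun ξ : Fin N → ℝ => ∑ l, ξ l * w l) (gaussPi N) =
      gaussianReal 0 (Real.toNNReal (∑ l, w l ^ 2)) := by
  have hm : Measurable (fun ξ : Fin N → ℝ => ∑ l, ξ l * w l) := by fun_prop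
  have : IsProbabilityMeasure (Measure.map (fun ξ : Fin N → ℝ => ∑ l, ξ l * w l) (gaussPi N)) :=
    Measure.isProbabilityMeasure_map hm.aemeasurable
  apply Measure.ext_of_charFun
  ext t
  rw [charFun_gaussianReal, charFun_apply_real, integral_map hm.aemeasurable (by fun_prop)]
  have h1 : ∀ ξ : Fin N → ℝ, Complex.exp (t * ((∑ l, ξ l * w l : ℝ) : ℂ) * Complex.I) =
      ∏ l, Complex.exp (((t * w l : ℝ) : ℂ) * (ξ l : ℂ) * Complex.I) := by
    intro ξ
    rw [← Complex.exp_sum]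
    congr 1
    push_cast
    rw [Finset.mul_sum, Finset.sum_mul]
    exact Finset.sum_congr rfl fun l _ => by ring
  simp_rw [h1]
  unfold gaussPi
  rw [integral_fintype_prod_eq_prod
    (f := fun l (x : ℝ) => Complex.exp (((t * w l : ℝ) : ℂ) * (x : ℂ) * Complex.I))]
  have h2 : ∀ l, ∫ x : ℝ, Complex.exp (((t * w l : ℝ) : ℂ) * (x : ℂ) * Complex.I)
      ∂(gaussianReal 0 1) = Complex.exp (-(((t * w l) ^ 2 / 2 : ℝ) : ℂ)) := by
    intro l
    rw [← charFun_apply_real, charFun_gaussianReal]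
    congr 1
    push_cast
    simp
  simp_rw [h2]
  rw [← Complex.exp_sum]
  congr 1
  rw [Real.coe_toNNReal _ (Finset.sum_nonneg fun l _ => sq_nonneg _)]
  push_cast
  simp only [Finset.sum_neg_distrib, mul_zero, zero_mul, zero_sub]
  rw [Finset.sum_mul, Finset.sum_div]
  congr 1
  exact Finset.sum_congr rfl fun l _ => by ring

lemma map_lin_proj {N p : ℕ} (V : Fin N → Fin p → ℝ) (S : Fin p → Fin p → ℝ)
    (hS : ∀ j k, ∑ l, V l j * V l k = S j k) (a : Fin p → ℝ) :
    Measure.map (fun y => ∑ j, a j * y j) (Measure.map (lin V) (gaussPi N)) =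
      gaussianReal 0 (Real.toNNReal (∑ j, ∑ k, a j * a k * S j k)) := by
  rw [Measure.map_map (by fun_prop) (continuous_lin V).measurable]
  have h3 : ((fun y : Fin p → ℝ => ∑ j, a j * y j) ∘ lin V) =
      fun ξ : Fin N → ℝ => ∑ l, ξ l * ∑ j, a j * V l j := by
    ext ξ
    simp only [Function.comp, lin, Finset.mul_sum]
    rw [Finset.sum_comm]
    exact Finset.sum_congr rfl fun l _ => Finset.sum_congr rfl fun j _ => by ring
  rw [h3, gaussPi_map_sum]
  congr 2
  simp_rw [← hS, Finset.mul_sum, sq, Finset.sum_mul_sum]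
  rw [Finset.sum_comm (t := (Finset.univ : Finset (Fin p))) (s := (Finset.univ : Finset (Fin N)))]
  refine Finset.sum_congr rfl fun j _ => ?_
  rw [Finset.sum_comm (t := (Finset.univ : Finset (Fin p))) (s := (Finset.univ : Finset (Fin N)))]
  exact Finset.sum_congr rfl fun k _ => Finset.sum_congr rfl fun l _ => by ring

/-- Cramér–Wold: a law all of whose projections are centred Gaussian with covariance
`∑ l, V l j * V l k` is the law of `lin V ξ`. -/
lemma eq_map_lin {N p : ℕ} (V : Fin N → Fin p → ℝ) (S : Fin p → Fin p → ℝ)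
    (hS : ∀ j k, ∑ l, V l j * V l k = S j k)
    (ν : Measure (Fin p → ℝ)) [IsProbabilityMeasure ν]
    (hν : ∀ a : Fin p → ℝ, Measure.map (fun y => ∑ j, a j * y j) ν =
          gaussianReal 0 (Real.toNNReal (∑ j, ∑ k, a j * a k * S j k))) :
    ν = Measure.map (lin V) (gaussPi N) := by
  have : IsProbabilityMeasure (Measure.map (lin V) (gaussPi N)) :=
    Measure.isProbabilityMeasure_map (continuous_lin V).aemeasurable
  apply Measure.ext_of_charFunDual
  ext L
  rw [charFunDual_eq_charFun_map_one, charFunDual_eq_charFun_map_one]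
  congr 1
  have hL : ∀ y : Fin p → ℝ, L y = ∑ j, L (Pi.single j 1) * y j := by
    intro y
    conv_lhs => rw [← Finset.univ_sum_single y]
    rw [map_sum]
    refine Finset.sum_congr rfl fun j _ => ?_
    have : (Pi.single j (y j) : Fin p → ℝ) = y j • Pi.single j 1 := by
      rw [← Pi.single_smul]; simp
    rw [this, map_smul, smul_eq_mul, mul_comm]
  have hL' : (L : (Fin p → ℝ) → ℝ) = fun y => ∑ j, L (Pi.single j 1) * y j := funext hL
  rw [hL', hν, map_lin_proj V S hS]

/-- Stein's identity for the standard normal law. -/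
lemma stein_one (f f' : ℝ → ℝ) (hf : ∀ x, HasDerivAt f (f' x) x) (hf' : Continuous f')
    (K : ℝ) (hK : ∀ x, |f x| ≤ K) (hK' : ∀ x, |f' x| ≤ K) :
    ∫ x, x * f x ∂(gaussianReal 0 1) = ∫ x, f' x ∂(gaussianReal 0 1) := by
  have hcf : Continuous f := continuous_iff_continuousAt.2 fun x => (hf x).continuousAt
  rw [integral_gaussianReal_eq_integral_smul one_ne_zero,
    integral_gaussianReal_eq_integral_smul one_ne_zero]
  have hpdf : ∀ x, HasDerivAt (gaussianPDFReal 0 1) (-x * gaussianPDFReal 0 1 x) x := by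
    intro x
    unfold gaussianPDFReal
    have h1 : HasDerivAt (fun x : ℝ => -(x - 0) ^ 2 / (2 * ((1 : ℝ≥0) : ℝ))) (-x) x := by
      have := (((hasDerivAt_id x).sub_const 0).pow 2).neg.div_const (2 * ((1 : ℝ≥0) : ℝ))
      refine this.congr_deriv ?_
      simp
      ring
    refine (h1.exp.const_mul _).congr_deriv ?_
    ring
  have hi1 : Integrable (gaussianPDFReal 0 1) := integrable_gaussianPDFReal 0 1
  have hcp : Continuous (gaussianPDFReal 0 1) :=
    continuous_iff_continuousAt.2 fun x => (hpdf x).continuousAt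
  have hi2 : Integrable (fun x => x * gaussianPDFReal 0 1 x) := by
    have h : Integrable (fun x : ℝ => x) (gaussianReal 0 1) :=
      (memLp_id_gaussianReal (1 : ℝ≥0)).integrable le_rfl
    rw [gaussianReal_of_var_ne_zero _ one_ne_zero,
      integrable_withDensity_iff_integrable_smul' (measurable_gaussianPDF _ _)
        (ae_of_all _ fun _ ↦ gaussianPDF_lt_top)] at h
    refine h.congr (ae_of_all _ fun x => ?_)
    simp [mul_comm]
  have key := integral_mul_deriv_eq_deriv_mul_of_integrable (A := ℝ) (u := f) (v := gaussianPDFReal 0 1)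
    (u' := f') (v' := fun x => -x * gaussianPDFReal 0 1 x)
    (fun x _ => hf x) (fun x _ => hpdf x) ?_ ?_ ?_
  · simp only [smul_eq_mul]
    have h1 : ∀ x, gaussianPDFReal 0 1 x * (x * f x) = -(f x * (-x * gaussianPDFReal 0 1 x)) :=
      fun x => by ring
    simp_rw [h1]
    rw [integral_neg, key, neg_neg]
    exact integral_congr_ae (ae_of_all _ fun x => mul_comm _ _)
  · have : Integrable (fun x => f x * (x * gaussianPDFReal 0 1 x)) :=
      hi2.bdd_mul hcf.aestronglyMeasurable (c := K) (ae_of_all _ hK)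
    refine this.neg.congr (ae_of_all _ fun x => ?_)
    simp
  · exact hi1.bdd_mul hf'.aestronglyMeasurable (c := K) (ae_of_all _ hK')
  · exact hi1.bdd_mul hcf.aestronglyMeasurable (c := K) (ae_of_all _ hK)

lemma integrable_eval_gaussPi {N : ℕ} (l : Fin N) :
    Integrable (fun ξ : Fin N → ℝ => ξ l) (gaussPi N) := by
  have h : Integrable (fun x : ℝ => x) (gaussianReal 0 1) :=
    (memLp_id_gaussianReal (1 : ℝ≥0)).integrable le_rfl
  exact (measurePreserving_eval (fun _ : Fin N => gaussianReal 0 1) l).integrable_comp_of_integrable h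

lemma integrable_of_bdd {α : Type*} [TopologicalSpace α] [MeasurableSpace α] [BorelSpace α]
    {μ : Measure α} [IsFiniteMeasure μ]
    {f : α → ℝ} (hf : Continuous f) (K : ℝ) (hK : ∀ x, |f x| ≤ K) : Integrable f μ :=
  Integrable.of_bound hf.measurable.aestronglyMeasurable K (ae_of_all _ hK)

/-- Gaussian integration by parts in one coordinate. -/
lemma stein_coord {N : ℕ} (l : Fin N) (f f' : (Fin N → ℝ) → ℝ)
    (hf : ∀ ξ, HasDerivAt (fun s => f (Function.update ξ l s)) (f' ξ) (ξ l))
    (hcf : Continuous f) (hcf' : Continuous f')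
    (K : ℝ) (hK : ∀ x, |f x| ≤ K) (hK' : ∀ x, |f' x| ≤ K) :
    ∫ ξ, ξ l * f ξ ∂(gaussPi N) = ∫ ξ, f' ξ ∂(gaussPi N) := by
  have hi : Integrable (fun ξ : Fin N → ℝ => ξ l * f ξ) (gaussPi N) :=
    (integrable_eval_gaussPi l).mul_bdd (c := K) hcf.aestronglyMeasurable (ae_of_all _ hK)
  have hi' : Integrable f' (gaussPi N) := integrable_of_bdd hcf' K hK'
  cases N with
  | zero => exact l.elim0
  | succ N =>
    have hmp := (measurePreserving_piFinSuccAbove (fun _ : Fin (N + 1) => gaussianReal 0 1) l).symm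
    unfold gaussPi at hi hi' ⊢
    rw [← hmp.integral_comp', ← hmp.integral_comp']
    rw [integral_prod_symm, integral_prod_symm]
    · refine integral_congr_ae (ae_of_all _ fun y => ?_)
      have hins : ∀ x : ℝ, (MeasurableEquiv.piFinSuccAbove (fun _ => ℝ) l).symm (x, y) =
          l.insertNth x y := fun _ => rfl
      have hupd : ∀ x s : ℝ, Function.update ((MeasurableEquiv.piFinSuccAbove (fun _ => ℝ) l).symm (x, y)) l s
          = (MeasurableEquiv.piFinSuccAbove (fun _ => ℝ) l).symm (s, y) := by
        intro x s
        simp [hins]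
      have hev : ∀ x : ℝ, (MeasurableEquiv.piFinSuccAbove (fun _ => ℝ) l).symm (x, y) l = x := by
        intro x
        simp [hins]
      have hc : Continuous fun x : ℝ => (MeasurableEquiv.piFinSuccAbove (fun _ => ℝ) l).symm (x, y) := by
        simp only [hins]
        exact Continuous.finInsertNth l continuous_id continuous_const
      have := stein_one (fun x => f ((MeasurableEquiv.piFinSuccAbove (fun _ => ℝ) l).symm (x, y)))
        (fun x => f' ((MeasurableEquiv.piFinSuccAbove (fun _ => ℝ) l).symm (x, y))) ?_
        (hcf'.comp hc) K (fun x => hK _) (fun x => hK' _)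
      · simpa [hev] using this
      · intro x
        have h := hf ((MeasurableEquiv.piFinSuccAbove (fun _ => ℝ) l).symm (x, y))
        simp_rw [hupd x] at h
        rwa [hev] at h
    · exact hmp.integrable_comp_of_integrable hi'
    · exact hmp.integrable_comp_of_integrable hi

/-! ### Functions with explicit gradients and the Slepian interpolation -/

/-- `φ` is differentiable on `ℝ^p` with partial derivatives `φ' k`. -/
def HasGrad {p : ℕ} (φ : (Fin p → ℝ) → ℝ) (φ' : Fin p → (Fin p → ℝ) → ℝ) : Prop :=
  ∀ y, HasFDerivAt φ (∑ k, φ' k y • (ContinuousLinearMap.proj k : (Fin p → ℝ) →L[ℝ] ℝ)) y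

lemma HasGrad.continuous {p : ℕ} {φ : (Fin p → ℝ) → ℝ} {φ' : Fin p → (Fin p → ℝ) → ℝ}
    (h : HasGrad φ φ') : Continuous φ :=
  continuous_iff_continuousAt.2 fun y => (h y).continuousAt

lemma HasGrad.comp_curve {p : ℕ} {φ : (Fin p → ℝ) → ℝ} {φ' : Fin p → (Fin p → ℝ) → ℝ}
    (h : HasGrad φ φ') {c : ℝ → Fin p → ℝ} {c' : Fin p → ℝ} {s : ℝ}
    (hc : ∀ k, HasDerivAt (fun x => c x k) (c' k) s) :
    HasDerivAt (fun x => φ (c x)) (∑ k, φ' k (c s) * c' k) s := by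
  have h1 : HasDerivAt c c' s := hasDerivAt_pi.2 hc
  refine ((h (c s)).comp_hasDerivAt s h1).congr_deriv ?_
  simp

lemma HasGrad.mul {p : ℕ} {φ ψ : (Fin p → ℝ) → ℝ} {φ' ψ' : Fin p → (Fin p → ℝ) → ℝ}
    (h : HasGrad φ φ') (h' : HasGrad ψ ψ') :
    HasGrad (fun y => φ y * ψ y) (fun k y => φ' k y * ψ y + φ y * ψ' k y) := by
  intro y
  refine ((h y).mul (h' y)).congr_fderiv ?_
  ext v
  simp only [_root_.add_apply, _root_.smul_apply,
    _root_.sum_apply, ContinuousLinearMap.proj_apply, smul_eq_mul, Finset.mul_sum]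
  rw [← Finset.sum_add_distrib]
  exact Finset.sum_congr rfl fun k _ => by ring

lemma HasGrad.comp {p : ℕ} {φ : (Fin p → ℝ) → ℝ} {φ' : Fin p → (Fin p → ℝ) → ℝ}
    (h : HasGrad φ φ') {g g' : ℝ → ℝ} (hg : ∀ y, HasDerivAt g (g' (φ y)) (φ y)) :
    HasGrad (fun y => g (φ y)) (fun k y => g' (φ y) * φ' k y) := by
  intro y
  refine ((hg y).comp_hasFDerivAt y (h y)).congr_fderiv ?_
  ext v
  simp only [_root_.smul_apply,
    _root_.sum_apply, ContinuousLinearMap.proj_apply, smul_eq_mul, Finset.mul_sum]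
  exact Finset.sum_congr rfl fun k _ => by ring

lemma HasGrad.congr {p : ℕ} {φ ψ : (Fin p → ℝ) → ℝ} {φ' ψ' : Fin p → (Fin p → ℝ) → ℝ}
    (h : HasGrad φ φ') (h0 : ∀ y, ψ y = φ y) (h1 : ∀ k y, ψ' k y = φ' k y) : HasGrad ψ ψ' := by
  have e0 : ψ = φ := funext h0
  have e1 : ψ' = φ' := funext fun k => funext fun y => h1 k y
  rw [e0, e1]; exact h

lemma HasGrad.sum {p : ℕ} {ι : Type*} (s : Finset ι) {φ : ι → (Fin p → ℝ) → ℝ}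
    {φ' : ι → Fin p → (Fin p → ℝ) → ℝ} (h : ∀ i, HasGrad (φ i) (φ' i)) :
    HasGrad (fun y => ∑ i ∈ s, φ i y) (fun k y => ∑ i ∈ s, φ' i k y) := by
  intro y
  refine (HasFDerivAt.fun_sum fun i (_ : i ∈ s) => h i y).congr_fderiv ?_
  rw [Finset.sum_comm]
  exact Finset.sum_congr rfl fun k _ => by rw [Finset.sum_smul]

lemma hasGrad_eval {p : ℕ} (j : Fin p) :
    HasGrad (fun y : Fin p → ℝ => y j) (fun k _ => if k = j then 1 else 0) := by
  intro y
  refine (hasFDerivAt_apply (𝕜 := ℝ) j y).congr_fderiv ?_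
  simp

lemma integrable_mul_comp_lin {N p : ℕ} (l : Fin N) (U : Fin N → Fin p → ℝ)
    {φ : (Fin p → ℝ) → ℝ} (hφ : Continuous φ) {K : ℝ} (hK : ∀ y, |φ y| ≤ K) :
    Integrable (fun ξ => ξ l * φ (lin U ξ)) (gaussPi N) :=
  (integrable_eval_gaussPi l).mul_bdd (c := K)
    (hφ.comp (continuous_lin U)).aestronglyMeasurable (ae_of_all _ fun _ => hK _)

/-- Gaussian integration by parts for a function of `lin U ξ`. -/
lemma stein_lin {N p : ℕ} (l : Fin N) (U : Fin N → Fin p → ℝ)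
    {φ : (Fin p → ℝ) → ℝ} {φ' : Fin p → (Fin p → ℝ) → ℝ} (h : HasGrad φ φ')
    (hc : ∀ k, Continuous (φ' k)) {K : ℝ} (hK : ∀ y, |φ y| ≤ K) (hK' : ∀ k y, |φ' k y| ≤ K) :
    ∫ ξ, ξ l * φ (lin U ξ) ∂(gaussPi N) =
      ∑ k, U l k * ∫ ξ, φ' k (lin U ξ) ∂(gaussPi N) := by
  have hb : ∀ ξ : Fin N → ℝ, |∑ k, φ' k (lin U ξ) * U l k| ≤ ∑ k, K * |U l k| := fun ξ =>
    (Finset.abs_sum_le_sum_abs _ _).trans (Finset.sum_le_sum fun k _ => by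
      rw [abs_mul]; exact mul_le_mul_of_nonneg_right (hK' k _) (abs_nonneg _))
  rw [stein_coord l (fun ξ => φ (lin U ξ)) (fun ξ => ∑ k, φ' k (lin U ξ) * U l k) ?_
    (h.continuous.comp (continuous_lin U))
    (continuous_finsetSum _ fun k _ => ((hc k).comp (continuous_lin U)).mul continuous_const)
    (max K (∑ k, K * |U l k|)) (fun x => (hK _).trans (le_max_left _ _))
    (fun x => (hb x).trans (le_max_right _ _))]
  · rw [integral_finsetSum]
    · refine Finset.sum_congr rfl fun k _ => ?_
      rw [integral_mul_const, mul_comm]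
    · intro k _
      exact (integrable_of_bdd ((hc k).comp (continuous_lin U)) K fun _ => hK' k _).mul_const _
  · intro ξ
    have h1 : ∀ k, HasDerivAt (fun s => lin U (Function.update ξ l s) k) (U l k) (ξ l) := by
      intro k
      have h2 : ∀ l' ∈ (Finset.univ : Finset (Fin N)),
          HasDerivAt (fun s => Function.update ξ l s l' * U l' k)
            ((if l' = l then 1 else 0) * U l' k) (ξ l) := by
        intro l' _
        apply HasDerivAt.mul_const
        by_cases hl : l' = l
        · subst hl; simpa using hasDerivAt_id' (ξ l')
        · simpa [Function.update_of_ne hl, hl] using hasDerivAt_const (ξ l) (ξ l')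
      refine (HasDerivAt.fun_sum h2).congr_deriv ?_
      simp
    have := h.comp_curve h1
    simpa using this

/-- Slepian's interpolation: for independent Gaussian vectors `lin U ξ`, `lin V ξ` whose
covariances differ by at most `Δ` entrywise, expectations of a smooth `h` differ by at most `Δ`
times a bound on the `ℓ¹` norm of the Hessian of `h`. The two vectors are joined by the rotation
`θ ↦ sin θ • lin U ξ + cos θ • lin V ξ`. -/
lemma slepian {N p : ℕ} (U V : Fin N → Fin p → ℝ)
    (horth : ∀ j k, ∑ l, U l j * V l k = 0) (Δ : ℝ) (hΔ0 : 0 ≤ Δ)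
    (hΔ : ∀ j k, |∑ l, U l j * U l k - ∑ l, V l j * V l k| ≤ Δ)
    {h : (Fin p → ℝ) → ℝ} {h1 : Fin p → (Fin p → ℝ) → ℝ} {h2 : Fin p → Fin p → (Fin p → ℝ) → ℝ}
    (hg : HasGrad h h1) (hg' : ∀ j, HasGrad (h1 j) (h2 j)) (hc : ∀ j k, Continuous (h2 j k))
    {K H : ℝ} (hK : ∀ y, |h y| ≤ K) (hK1 : ∀ j y, |h1 j y| ≤ K) (hK2 : ∀ j k y, |h2 j k y| ≤ K)
    (hH : ∀ y, ∑ j, ∑ k, |h2 j k y| ≤ H) :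
    |∫ ξ, h (lin U ξ) ∂(gaussPi N) - ∫ ξ, h (lin V ξ) ∂(gaussPi N)| ≤ Δ * H := by
  set Z : ℝ → Fin N → Fin p → ℝ := fun θ l j => Real.sin θ * U l j + Real.cos θ * V l j with hZ
  set W : ℝ → Fin N → Fin p → ℝ := fun θ l j => Real.cos θ * U l j - Real.sin θ * V l j with hW
  have hcov : ∀ θ j k, ∑ l, W θ l j * Z θ l k =
      Real.sin θ * Real.cos θ * (∑ l, U l j * U l k - ∑ l, V l j * V l k) := by
    intro θ j k
    have h0 := horth j k
    have h0' := horth k j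
    have : ∀ l, W θ l j * Z θ l k = Real.sin θ * Real.cos θ * (U l j * U l k)
        - Real.sin θ * Real.cos θ * (V l j * V l k) + Real.cos θ ^ 2 * (U l j * V l k)
        - Real.sin θ ^ 2 * (U l k * V l j) := by intro l; simp only [hZ, hW]; ring
    simp_rw [this, Finset.sum_sub_distrib, Finset.sum_add_distrib, Finset.sum_sub_distrib,
      ← Finset.mul_sum, h0, h0']
    ring
  have hH0 : 0 ≤ H := le_trans (Finset.sum_nonneg fun j _ => Finset.sum_nonneg fun k _ =>
    abs_nonneg _) (hH 0)
  have hder : ∀ θ : ℝ, HasDerivAt (fun θ => ∫ ξ, h (lin (Z θ) ξ) ∂(gaussPi N))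
      (∫ ξ, ∑ j, h1 j (lin (Z θ) ξ) * lin (W θ) ξ j ∂(gaussPi N)) θ := by
    intro θ
    have hcurve : ∀ θ (ξ : Fin N → ℝ) j, HasDerivAt (fun θ => lin (Z θ) ξ j) (lin (W θ) ξ j) θ := by
      intro θ ξ j
      simp only [lin]
      refine HasDerivAt.fun_sum fun l _ => ?_
      refine HasDerivAt.const_mul _ ?_
      simp only [hZ, hW]
      refine (((Real.hasDerivAt_sin θ).mul_const _).add
        ((Real.hasDerivAt_cos θ).mul_const _)).congr_deriv ?_
      ring
    have hK0 : 0 ≤ K := le_trans (abs_nonneg _) (hK 0)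
    refine (hasDerivAt_integral_of_dominated_loc_of_deriv_le (μ := gaussPi N)
      (bound := fun ξ => ∑ j : Fin p, K * ∑ l, |ξ l| * (|U l j| + |V l j|))
      (s := Set.univ) univ_mem
      (F := fun θ ξ => h (lin (Z θ) ξ))
      (F' := fun θ ξ => ∑ j, h1 j (lin (Z θ) ξ) * lin (W θ) ξ j) ?_ ?_ ?_ ?_ ?_ ?_).2
    · exact Eventually.of_forall fun θ =>
        (hg.continuous.comp (continuous_lin _)).aestronglyMeasurable
    · exact integrable_of_bdd (hg.continuous.comp (continuous_lin _)) K fun _ => hK _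
    · refine Continuous.aestronglyMeasurable ?_
      refine continuous_finsetSum _ fun j _ => ?_
      exact ((hg' j).continuous.comp (continuous_lin _)).mul
        ((continuous_apply j).comp (continuous_lin _))
    · refine ae_of_all _ fun ξ θ _ => ?_
      rw [Real.norm_eq_abs]
      refine (Finset.abs_sum_le_sum_abs _ _).trans (Finset.sum_le_sum fun j _ => ?_)
      rw [abs_mul]
      refine mul_le_mul (hK1 j _) ?_ (abs_nonneg _) hK0
      refine (Finset.abs_sum_le_sum_abs _ _).trans (Finset.sum_le_sum fun l _ => ?_)
      rw [abs_mul]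
      refine mul_le_mul_of_nonneg_left ?_ (abs_nonneg _)
      simp only [hW]
      refine (abs_sub _ _).trans ?_
      rw [abs_mul, abs_mul]
      exact add_le_add (mul_le_of_le_one_left (abs_nonneg _) (Real.abs_cos_le_one θ))
        (mul_le_of_le_one_left (abs_nonneg _) (Real.abs_sin_le_one θ))
    · refine integrable_finsetSum _ fun j _ => (integrable_finsetSum _ fun l _ => ?_).const_mul _
      exact (integrable_eval_gaussPi l).abs.mul_const _
    · exact ae_of_all _ fun ξ θ _ => hg.comp_curve (hcurve θ ξ)
  have hval : ∀ θ, ∫ ξ, ∑ j, h1 j (lin (Z θ) ξ) * lin (W θ) ξ j ∂(gaussPi N) =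
      ∑ j, ∑ k, Real.sin θ * Real.cos θ * (∑ l, U l j * U l k - ∑ l, V l j * V l k) *
        ∫ ξ, h2 j k (lin (Z θ) ξ) ∂(gaussPi N) := by
    intro θ
    have hii : ∀ j l, Integrable (fun ξ => W θ l j * (ξ l * h1 j (lin (Z θ) ξ))) (gaussPi N) :=
      fun j l => (integrable_mul_comp_lin l _ (hg' j).continuous (hK1 j)).const_mul _
    have he : ∀ ξ j, h1 j (lin (Z θ) ξ) * lin (W θ) ξ j =
        ∑ l, W θ l j * (ξ l * h1 j (lin (Z θ) ξ)) := by
      intro ξ j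
      rw [show lin (W θ) ξ j = ∑ l, ξ l * W θ l j from rfl, Finset.mul_sum]
      exact Finset.sum_congr rfl fun l _ => by ring
    simp_rw [he]
    rw [integral_finsetSum _ fun j _ => integrable_finsetSum _ fun l _ => hii j l]
    refine Finset.sum_congr rfl fun j _ => ?_
    rw [integral_finsetSum _ fun l _ => hii j l]
    simp_rw [integral_const_mul, stein_lin _ (Z θ) (hg' j) (hc j) (hK1 j) (hK2 j), ← hcov,
      Finset.mul_sum, Finset.sum_mul]
    rw [Finset.sum_comm]
    exact Finset.sum_congr rfl fun k _ => Finset.sum_congr rfl fun l _ => by ring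
  have hbound : ∀ θ, ‖∫ ξ, ∑ j, h1 j (lin (Z θ) ξ) * lin (W θ) ξ j ∂(gaussPi N)‖ ≤ Δ * H / 2 := by
    intro θ
    rw [hval, Real.norm_eq_abs]
    calc _ ≤ ∑ j, ∑ k, (1 / 2) * Δ * ∫ ξ, |h2 j k (lin (Z θ) ξ)| ∂(gaussPi N) := by
          refine (Finset.abs_sum_le_sum_abs _ _).trans (Finset.sum_le_sum fun j _ => ?_)
          refine (Finset.abs_sum_le_sum_abs _ _).trans (Finset.sum_le_sum fun k _ => ?_)
          rw [abs_mul, abs_mul]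
          refine mul_le_mul (mul_le_mul ?_ (hΔ j k) (abs_nonneg _) (by norm_num))
            (abs_integral_le_integral_abs) (abs_nonneg _) (by positivity)
          rw [abs_le]
          constructor <;> nlinarith [Real.sin_sq_add_cos_sq θ, sq_nonneg (Real.sin θ - Real.cos θ),
            sq_nonneg (Real.sin θ + Real.cos θ)]
      _ = Δ / 2 * ∫ ξ, ∑ j, ∑ k, |h2 j k (lin (Z θ) ξ)| ∂(gaussPi N) := by
          have hii : ∀ j k, Integrable (fun ξ => |h2 j k (lin (Z θ) ξ)|) (gaussPi N) := fun j k =>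
            (integrable_of_bdd ((hc j k).comp (continuous_lin _)) K fun _ => hK2 j k _).abs
          rw [integral_finsetSum _ fun j _ => integrable_finsetSum _ fun k _ => hii j k]
          simp_rw [integral_finsetSum _ fun k _ => hii _ k, Finset.mul_sum]
          exact Finset.sum_congr rfl fun k _ => Finset.sum_congr rfl fun l _ => by ring
      _ ≤ Δ / 2 * ∫ ξ, H ∂(gaussPi N) := by
          refine mul_le_mul_of_nonneg_left (integral_mono ?_ (integrable_const _) fun ξ => hH _)
            (by positivity)
          exact integrable_finsetSum _ fun j _ => integrable_finsetSum _ fun k _ =>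
            (integrable_of_bdd ((hc j k).comp (continuous_lin _)) K fun _ => hK2 j k _).abs
      _ = Δ * H / 2 := by simp; ring
  have hmv := (convex_univ (𝕜 := ℝ) (E := ℝ)).norm_image_sub_le_of_norm_hasDerivWithin_le
    (f := fun θ => ∫ ξ, h (lin (Z θ) ξ) ∂(gaussPi N)) (x := 0) (y := Real.pi / 2)
    (fun θ _ => (hder θ).hasDerivWithinAt) (fun θ _ => hbound θ) (Set.mem_univ _) (Set.mem_univ _)
  have e1 : Z (Real.pi / 2) = U := by funext l j; simp [hZ]
  have e0 : Z 0 = V := by funext l j; simp [hZ]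
  simp only [e1, e0, Real.norm_eq_abs, sub_zero] at hmv
  refine hmv.trans ?_
  rw [abs_of_pos (by positivity)]
  have hDH : 0 ≤ Δ * H := by have := (norm_nonneg _).trans (hbound 0); linarith
  nlinarith [Real.pi_le_four]

/-! ### The soft maximum -/

/-- The soft maximum `β⁻¹ log ∑ⱼ exp (β yⱼ)`. -/
def smax {p : ℕ} (β : ℝ) (y : Fin p → ℝ) : ℝ := β⁻¹ * Real.log (∑ j, Real.exp (β * y j))

/-- The Gibbs weights `exp (β yⱼ) / ∑ₖ exp (β yₖ)`, the gradient of `smax`. -/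
def wt {p : ℕ} (β : ℝ) (j : Fin p) (y : Fin p → ℝ) : ℝ :=
  Real.exp (β * y j) * (∑ k, Real.exp (β * y k))⁻¹

lemma sum_exp_pos {p : ℕ} (hp : 0 < p) (β : ℝ) (y : Fin p → ℝ) :
    0 < ∑ j, Real.exp (β * y j) :=
  Finset.sum_pos (fun _ _ => Real.exp_pos _) ⟨⟨0, hp⟩, Finset.mem_univ _⟩

lemma hasGrad_exp {p : ℕ} (β : ℝ) (j : Fin p) :
    HasGrad (fun y : Fin p → ℝ => Real.exp (β * y j))
      (fun k y => if k = j then β * Real.exp (β * y j) else 0) := by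
  refine (HasGrad.comp (hasGrad_eval j) (g := fun x => Real.exp (β * x))
    (g' := fun x => Real.exp (β * x) * β) fun y => ?_).congr (fun _ => rfl) fun k y => ?_
  · simpa using ((hasDerivAt_id' (y j)).const_mul β).exp
  · split_ifs <;> simp [mul_comm]

lemma hasGrad_sum_exp {p : ℕ} (β : ℝ) :
    HasGrad (fun y : Fin p → ℝ => ∑ j, Real.exp (β * y j))
      (fun k y => β * Real.exp (β * y k)) :=
  (HasGrad.sum Finset.univ fun j => hasGrad_exp β j).congr (fun _ => rfl) fun k y => by simp

lemma hasGrad_smax {p : ℕ} (hp : 0 < p) {β : ℝ} (hβ : β ≠ 0) :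
    HasGrad (smax (p := p) β) (wt β) := by
  refine (HasGrad.comp (hasGrad_sum_exp (p := p) β) (g := fun x => β⁻¹ * Real.log x)
    (g' := fun x => β⁻¹ * x⁻¹) fun y => ?_).congr (fun _ => rfl) fun k y => ?_
  · exact (Real.hasDerivAt_log (sum_exp_pos hp β y).ne').const_mul _
  · simp only [wt]; field_simp

lemma hasGrad_wt {p : ℕ} (hp : 0 < p) (β : ℝ) (j : Fin p) :
    HasGrad (wt (p := p) β j)
      (fun k y => β * wt β j y * ((if k = j then 1 else 0) - wt β k y)) := by
  refine ((hasGrad_exp β j).mul (HasGrad.comp (hasGrad_sum_exp (p := p) β) (g := fun x => x⁻¹)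
    (g' := fun x => -(x ^ 2)⁻¹) fun y => ?_)).congr (fun _ => rfl) fun k y => ?_
  · exact hasDerivAt_inv (sum_exp_pos hp β y).ne'
  · have := (sum_exp_pos hp β y).ne'
    simp only [wt]
    split_ifs
    · field_simp; ring
    · field_simp; ring

lemma wt_nonneg {p : ℕ} (β : ℝ) (j : Fin p) (y : Fin p → ℝ) : 0 ≤ wt β j y :=
  mul_nonneg (Real.exp_pos _).le (inv_nonneg.2 (Finset.sum_nonneg fun _ _ => (Real.exp_pos _).le))

lemma wt_sum {p : ℕ} (hp : 0 < p) (β : ℝ) (y : Fin p → ℝ) : ∑ j, wt β j y = 1 := by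
  simp only [wt]
  rw [← Finset.sum_mul, mul_inv_cancel₀ (sum_exp_pos hp β y).ne']

lemma wt_le_one {p : ℕ} (hp : 0 < p) (β : ℝ) (j : Fin p) (y : Fin p → ℝ) : wt β j y ≤ 1 := by
  rw [← wt_sum hp β y]
  exact Finset.single_le_sum (fun k _ => wt_nonneg β k y) (Finset.mem_univ j)

lemma le_smax {p : ℕ} {β : ℝ} (hβ : 0 < β) (j : Fin p) (y : Fin p → ℝ) : y j ≤ smax β y := by
  have h1 : Real.exp (β * y j) ≤ ∑ k, Real.exp (β * y k) :=
    Finset.single_le_sum (fun k _ => (Real.exp_pos (β * y k)).le) (Finset.mem_univ j)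
  have h2 := Real.log_le_log (Real.exp_pos _) h1
  rw [Real.log_exp] at h2
  unfold smax
  rw [le_inv_mul_iff₀ hβ]
  exact h2

lemma smax_le {p : ℕ} (hp : 0 < p) {β : ℝ} (hβ : 0 < β) (y : Fin p → ℝ) (t : ℝ)
    (h : ∀ j, y j ≤ t) : smax β y ≤ t + Real.log p / β := by
  have h1 : ∑ k, Real.exp (β * y k) ≤ p * Real.exp (β * t) := by
    refine (Finset.sum_le_card_nsmul _ _ (Real.exp (β * t)) fun k _ => ?_).trans (by simp)
    exact Real.exp_le_exp.2 (mul_le_mul_of_nonneg_left (h k) hβ.le)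
  have h2 := Real.log_le_log (sum_exp_pos hp β y) h1
  rw [Real.log_mul (by positivity) (Real.exp_pos _).ne', Real.log_exp] at h2
  unfold smax
  rw [inv_mul_le_iff₀ hβ]
  refine h2.trans (le_of_eq ?_)
  field_simp
  ring

lemma continuous_smax {p : ℕ} (hp : 0 < p) {β : ℝ} (hβ : 0 < β) :
    Continuous (smax (p := p) β) := (hasGrad_smax hp hβ.ne').continuous

lemma continuous_wt {p : ℕ} (hp : 0 < p) (β : ℝ) (j : Fin p) : Continuous (wt (p := p) β j) :=
  (hasGrad_wt hp β j).continuous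

/-! ### Anti-concentration of Gaussian maxima -/

/-- Jensen's inequality for the Gibbs weights, summed over the Gaussian factors. -/
lemma quad_le {N p : ℕ} (V : Fin N → Fin p → ℝ) (w : Fin p → ℝ) (hw : ∀ j, 0 ≤ w j)
    (hs : ∑ j, w j = 1) :
    ∑ j, ∑ k, w j * w k * ∑ l, V l j * V l k ≤ ∑ j, w j * ∑ l, V l j * V l j := by
  have h1 : ∑ j, ∑ k, w j * w k * ∑ l, V l j * V l k = ∑ l, (∑ j, w j * V l j) ^ 2 := by
    simp_rw [sq, Finset.sum_mul_sum, Finset.mul_sum]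
    rw [Finset.sum_comm (s := (Finset.univ : Finset (Fin N)))]
    refine Finset.sum_congr rfl fun j _ => ?_
    rw [Finset.sum_comm (s := (Finset.univ : Finset (Fin N)))]
    exact Finset.sum_congr rfl fun k _ => Finset.sum_congr rfl fun l _ => by ring
  have h2 : ∑ j, w j * ∑ l, V l j * V l j = ∑ l, ∑ j, w j * V l j ^ 2 := by
    simp_rw [Finset.mul_sum]
    rw [Finset.sum_comm]
    exact Finset.sum_congr rfl fun k _ => Finset.sum_congr rfl fun l _ => by ring
  rw [h1, h2]
  refine Finset.sum_le_sum fun l _ => ?_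
  simpa using ((even_two.convexOn_pow (𝕜 := ℝ)).map_sum_le (t := Finset.univ) (w := w) (p := V l)
    (fun j _ => hw j) hs (fun _ _ => Set.mem_univ _))

/-- An integrable envelope of `max (0, maxⱼ Yⱼ)` with expectation at most
`(log (2p) + lam² C₁ / 2) / lam`, from the exponential moments. -/
lemma exists_envelope {N p : ℕ} (hp : 0 < p) (V : Fin N → Fin p → ℝ) (C₁ : ℝ)
    (hV : ∀ j, ∑ l, V l j * V l j ≤ C₁) (lam : ℝ) (hl : 0 < lam) :
    ∃ B : (Fin N → ℝ) → ℝ, Integrable B (gaussPi N) ∧ (∀ ξ, 0 ≤ B ξ) ∧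
      (∀ ξ j, lin V ξ j ≤ B ξ) ∧
      ∫ ξ, B ξ ∂(gaussPi N) ≤ (Real.log (2 * p) + lam ^ 2 * C₁ / 2) / lam := by
  have hC0 : 0 ≤ C₁ := le_trans (Finset.sum_nonneg fun l _ => mul_self_nonneg _) (hV ⟨0, hp⟩)
  have hp1 : (1 : ℝ) ≤ p := by exact_mod_cast hp
  set a : ℝ := 2 * p * Real.exp (lam ^ 2 * C₁ / 2) with ha
  have ha0 : 0 < a := by positivity
  have hlaw : ∀ j, Measure.map (fun ξ => lin V ξ j) (gaussPi N) =
      gaussianReal 0 (Real.toNNReal (∑ l, V l j ^ 2)) := fun j => gaussPi_map_sum fun l => V l j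
  have hm : ∀ j, Measurable fun ξ : Fin N → ℝ => lin V ξ j := fun j =>
    ((continuous_apply j).comp (continuous_lin V)).measurable
  have hInt : ∀ j, Integrable (fun ξ => Real.exp (lam * lin V ξ j)) (gaussPi N) := by
    intro j
    have h := integrable_exp_mul_gaussianReal (μ := 0) (v := Real.toNNReal (∑ l, V l j ^ 2)) lam
    rw [← hlaw j] at h
    exact h.comp_measurable (hm j)
  have hmgf : ∀ j, ∫ ξ, Real.exp (lam * lin V ξ j) ∂(gaussPi N) ≤
      Real.exp (lam ^ 2 * C₁ / 2) := by
    intro j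
    have h := mgf_gaussianReal (hlaw j) lam
    unfold mgf at h
    rw [h, Real.coe_toNNReal _ (Finset.sum_nonneg fun l _ => sq_nonneg _)]
    refine Real.exp_le_exp.2 ?_
    have := hV j
    simp_rw [← sq] at this
    nlinarith [sq_nonneg lam]
  have hi1 : Integrable (fun ξ => 1 + ∑ j, Real.exp (lam * lin V ξ j)) (gaussPi N) :=
    (integrable_const _).add (integrable_finsetSum _ fun j _ => hInt j)
  -- Tangent-line bound for `log` at the point `a`.
  have hlog : ∀ u : ℝ, 0 < u → Real.log u ≤ Real.log a - 1 + u / a := by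
    intro u hu
    have h := Real.log_le_sub_one_of_pos (div_pos hu ha0)
    rw [Real.log_div hu.ne' ha0.ne'] at h
    linarith
  refine ⟨fun ξ => lam⁻¹ * (Real.log a - 1 + (1 + ∑ j, Real.exp (lam * lin V ξ j)) / a),
    ((integrable_const _).add (hi1.div_const a)).const_mul _, fun ξ => ?_, fun ξ j => ?_, ?_⟩
  · have h0 : 0 ≤ ∑ j, Real.exp (lam * lin V ξ j) := Finset.sum_nonneg fun _ _ => (Real.exp_pos _).le
    have := hlog (1 + ∑ j, Real.exp (lam * lin V ξ j)) (by linarith)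
    have h1 := Real.log_nonneg (show (1 : ℝ) ≤ 1 + ∑ j, Real.exp (lam * lin V ξ j) by linarith)
    exact mul_nonneg (inv_nonneg.2 hl.le) (by linarith)
  · have h0 : 0 ≤ ∑ j, Real.exp (lam * lin V ξ j) := Finset.sum_nonneg fun _ _ => (Real.exp_pos _).le
    have := hlog (1 + ∑ j, Real.exp (lam * lin V ξ j)) (by linarith)
    rw [le_inv_mul_iff₀ hl]
    refine le_trans ?_ this
    rw [Real.le_log_iff_exp_le (by linarith)]
    have := Finset.single_le_sum (f := fun j => Real.exp (lam * lin V ξ j))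
      (fun k _ => (Real.exp_pos _).le) (Finset.mem_univ j)
    linarith
  · rw [integral_const_mul, integral_add (integrable_const _) (hi1.div_const a), integral_div,
      integral_add (integrable_const _) (integrable_finsetSum _ fun j _ => hInt j),
      integral_finsetSum _ fun j _ => hInt j]
    have h1 : ∑ j : Fin p, ∫ ξ, Real.exp (lam * lin V ξ j) ∂(gaussPi N) ≤
        p * Real.exp (lam ^ 2 * C₁ / 2) :=
      (Finset.sum_le_card_nsmul _ _ _ fun k _ => hmgf k).trans (by simp)
    have h2 : (1 : ℝ) ≤ p * Real.exp (lam ^ 2 * C₁ / 2) :=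
      one_le_mul_of_one_le_of_one_le hp1 (Real.one_le_exp (by positivity))
    have h3 : (1 + ∑ j : Fin p, ∫ ξ, Real.exp (lam * lin V ξ j) ∂(gaussPi N)) / a ≤ 1 := by
      rw [div_le_one ha0, ha]; linarith
    have h4 : Real.log a = Real.log (2 * p) + lam ^ 2 * C₁ / 2 := by
      rw [ha, Real.log_mul (by positivity) (Real.exp_pos _).ne', Real.log_exp]
    rw [← h4, div_eq_inv_mul (Real.log a) lam]
    refine mul_le_mul_of_nonneg_left ?_ (inv_nonneg.2 hl.le)
    simp only [integral_const, probReal_univ, smul_eq_mul, one_mul]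
    linarith

/-- Integration by parts of `∑ j, Y j * wt β j Y * g (smax β Y)`. With `Σ` the covariance of `Y` and
`w` the Gibbs weights, it produces `β g (∑ j, w j Σ j j - wᵀ Σ w) + g' wᵀ Σ w`, which is at least
`g' ∑ j, w j Σ j j ≥ c₁ g'` by `quad_le` and `g' ≤ β g`. -/
lemma anti_core {N p : ℕ} (hp : 0 < p) (V : Fin N → Fin p → ℝ) (c₁ : ℝ)
    (hV : ∀ j, c₁ ≤ ∑ l, V l j * V l j) {β : ℝ} (hβ : 0 < β) {g g' : ℝ → ℝ}
    (hg : ∀ x, HasDerivAt g (g' x) x) (hg'c : Continuous g') (h0 : ∀ x, 0 ≤ g' x)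
    (hle : ∀ x, g' x ≤ β * g x) {M : ℝ} (hM : ∀ x, g x ≤ M)
    {B : (Fin N → ℝ) → ℝ} (hB : Integrable B (gaussPi N)) (hB0 : ∀ ξ, 0 ≤ B ξ)
    (hBle : ∀ ξ j, lin V ξ j ≤ B ξ) :
    c₁ * ∫ ξ, g' (smax β (lin V ξ)) ∂(gaussPi N) ≤ M * ∫ ξ, B ξ ∂(gaussPi N) := by
  have hg0 : ∀ x, 0 ≤ g x := fun x => by
    have := (h0 x).trans (hle x)
    exact nonneg_of_mul_nonneg_right this hβ
  have hM0 : 0 ≤ M := (hg0 0).trans (hM 0)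
  have hgM : ∀ x, |g x| ≤ M := fun x => by rw [abs_of_nonneg (hg0 x)]; exact hM x
  have hg'M : ∀ x, |g' x| ≤ β * M := fun x => by
    rw [abs_of_nonneg (h0 x)]; exact (hle x).trans (mul_le_mul_of_nonneg_left (hM x) hβ.le)
  have hgc : Continuous g := continuous_iff_continuousAt.2 fun x => (hg x).continuousAt
  have hsc := continuous_smax hp hβ
  set φ : Fin p → (Fin p → ℝ) → ℝ := fun j y => wt β j y * g (smax β y) with hφ
  set φ' : Fin p → Fin p → (Fin p → ℝ) → ℝ := fun j k y =>
    β * wt β j y * ((if k = j then 1 else 0) - wt β k y) * g (smax β y) +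
      wt β j y * (g' (smax β y) * wt β k y) with hφ'
  have hgrad : ∀ j, HasGrad (φ j) (φ' j) := fun j =>
    (hasGrad_wt hp β j).mul ((hasGrad_smax hp hβ.ne').comp fun y => hg (smax β y))
  have hcont : ∀ j k, Continuous (φ' j k) := by
    intro j k
    have h1 := continuous_wt hp β j
    have h2 := continuous_wt hp β k
    have h3 := hgc.comp hsc
    have h4 := hg'c.comp hsc
    simp only [hφ']
    exact (((continuous_const.mul h1).mul (continuous_const.sub h2)).mul h3).add
      (h1.mul (h4.mul h2))
  have hwabs : ∀ j y, |wt (p := p) β j y| ≤ 1 := fun j y => by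
    rw [abs_of_nonneg (wt_nonneg β j y)]; exact wt_le_one hp β j y
  set K : ℝ := M + 2 * (β * M) with hKdef
  have hβM : 0 ≤ β * M := mul_nonneg hβ.le hM0
  have hK : ∀ j y, |φ j y| ≤ K := by
    intro j y
    simp only [hφ]
    rw [abs_mul]
    have := mul_le_mul (hwabs j y) (hgM (smax β y)) (abs_nonneg _) zero_le_one
    linarith
  have hK' : ∀ j k y, |φ' j k y| ≤ K := by
    intro j k y
    simp only [hφ']
    refine (abs_add_le _ _).trans ?_
    rw [abs_mul, abs_mul, abs_mul, abs_mul, abs_mul, abs_of_pos hβ]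
    have hd : |(if k = j then (1 : ℝ) else 0) - wt β k y| ≤ 1 := by
      have := wt_nonneg β k y
      have := wt_le_one hp β k y
      rw [abs_le]; split_ifs <;> constructor <;> linarith
    have a1 : β * |wt β j y| * |(if k = j then (1 : ℝ) else 0) - wt β k y| * |g (smax β y)| ≤
        β * 1 * 1 * M := by
      gcongr
      · exact hwabs j y
      · exact hgM _
    have a2 : |wt β j y| * (|g' (smax β y)| * |wt β k y|) ≤ 1 * (β * M * 1) := by
      gcongr
      · exact hwabs j y
      · exact hg'M _
      · exact hwabs k y
    linarith
  -- Stein's identity summed over coordinates.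
  have hst : ∫ ξ, ∑ j, lin V ξ j * φ j (lin V ξ) ∂(gaussPi N) =
      ∫ ξ, ∑ j, ∑ k, (∑ l, V l j * V l k) * φ' j k (lin V ξ) ∂(gaussPi N) := by
    have hii : ∀ j l, Integrable (fun ξ => V l j * (ξ l * φ j (lin V ξ))) (gaussPi N) :=
      fun j l => (integrable_mul_comp_lin l _ (hgrad j).continuous (hK j)).const_mul _
    have hii' : ∀ j k, Integrable (fun ξ => (∑ l, V l j * V l k) * φ' j k (lin V ξ)) (gaussPi N) :=
      fun j k => (integrable_of_bdd ((hcont j k).comp (continuous_lin V)) K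
        fun _ => hK' j k _).const_mul _
    have he : ∀ ξ j, lin V ξ j * φ j (lin V ξ) = ∑ l, V l j * (ξ l * φ j (lin V ξ)) := by
      intro ξ j
      rw [show lin V ξ j = ∑ l, ξ l * V l j from rfl, Finset.sum_mul]
      exact Finset.sum_congr rfl fun l _ => by ring
    simp_rw [he]
    rw [integral_finsetSum _ fun j _ => integrable_finsetSum _ fun l _ => hii j l,
      integral_finsetSum _ fun j _ => integrable_finsetSum _ fun l _ => hii' j l]
    refine Finset.sum_congr rfl fun j _ => ?_
    rw [integral_finsetSum _ fun l _ => hii j l, integral_finsetSum _ fun l _ => hii' j l]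
    simp_rw [integral_const_mul, stein_lin _ V (hgrad j) (hcont j) (hK j) (hK' j),
      Finset.mul_sum, Finset.sum_mul]
    rw [Finset.sum_comm]
    exact Finset.sum_congr rfl fun k _ => Finset.sum_congr rfl fun l _ => by ring
  have hlow : c₁ * ∫ ξ, g' (smax β (lin V ξ)) ∂(gaussPi N) ≤
      ∫ ξ, ∑ j, ∑ k, (∑ l, V l j * V l k) * φ' j k (lin V ξ) ∂(gaussPi N) := by
    rw [← integral_const_mul]
    refine integral_mono ?_ ?_ fun ξ => ?_
    · exact (integrable_of_bdd ((hg'c.comp hsc).comp (continuous_lin V)) _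
        fun _ => hg'M _).const_mul _
    · exact integrable_finsetSum _ fun j _ => integrable_finsetSum _ fun k _ =>
        (integrable_of_bdd ((hcont j k).comp (continuous_lin V)) K fun _ => hK' j k _).const_mul _
    · set y := lin V ξ
      have hq := quad_le V (fun j => wt β j y) (fun j => wt_nonneg β j y) (wt_sum hp β y)
      set Q := ∑ j, ∑ k, wt β j y * wt β k y * ∑ l, V l j * V l k with hQ
      set A := ∑ j, wt β j y * ∑ l, V l j * V l j with hA
      have hAc : c₁ ≤ A := by
        calc c₁ = ∑ j, wt β j y * c₁ := by rw [← Finset.sum_mul, wt_sum hp, one_mul]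
          _ ≤ A := Finset.sum_le_sum fun j _ =>
            mul_le_mul_of_nonneg_left (hV j) (wt_nonneg β j y)
      have hexp : ∑ j, ∑ k, (∑ l, V l j * V l k) * φ' j k y =
          β * g (smax β y) * (A - Q) + g' (smax β y) * Q := by
        have e1 : A = ∑ j, ∑ k, (if k = j then wt β j y * ∑ l, V l j * V l k else 0) := by
          simp [hA]
        rw [e1, hQ, ← Finset.sum_sub_distrib, Finset.mul_sum, Finset.mul_sum,
          ← Finset.sum_add_distrib]
        refine Finset.sum_congr rfl fun j _ => ?_
        rw [← Finset.sum_sub_distrib, Finset.mul_sum, Finset.mul_sum, ← Finset.sum_add_distrib]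
        refine Finset.sum_congr rfl fun k _ => ?_
        simp only [hφ']
        split_ifs <;> ring
      show c₁ * g' (smax β y) ≤ ∑ j, ∑ k, (∑ l, V l j * V l k) * φ' j k y
      rw [hexp]
      have b1 := mul_le_mul_of_nonneg_right (hle (smax β y)) (sub_nonneg.2 hq)
      have b2 := mul_le_mul_of_nonneg_right hAc (h0 (smax β y))
      nlinarith
  have hup : ∫ ξ, ∑ j, lin V ξ j * φ j (lin V ξ) ∂(gaussPi N) ≤ M * ∫ ξ, B ξ ∂(gaussPi N) := by
    rw [← integral_const_mul]
    refine integral_mono ?_ (hB.const_mul M) fun ξ => ?_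
    · refine integrable_finsetSum _ fun j _ => ?_
      have he : (fun ξ => lin V ξ j * φ j (lin V ξ)) =
          fun ξ => ∑ l, V l j * (ξ l * φ j (lin V ξ)) := by
        funext ξ
        rw [show lin V ξ j = ∑ l, ξ l * V l j from rfl, Finset.sum_mul]
        exact Finset.sum_congr rfl fun l _ => by ring
      rw [he]
      exact integrable_finsetSum _ fun l _ =>
        (integrable_mul_comp_lin l _ (hgrad j).continuous (hK j)).const_mul _
    · calc ∑ j, lin V ξ j * φ j (lin V ξ)
          ≤ ∑ j, wt β j (lin V ξ) * (B ξ * g (smax β (lin V ξ))) := by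
            refine Finset.sum_le_sum fun j _ => ?_
            simp only [hφ]
            have := mul_le_mul_of_nonneg_right (hBle ξ j)
              (mul_nonneg (wt_nonneg β j (lin V ξ)) (hg0 (smax β (lin V ξ))))
            linarith
        _ = B ξ * g (smax β (lin V ξ)) := by rw [← Finset.sum_mul, wt_sum hp, one_mul]
        _ ≤ M * B ξ := by
            rw [mul_comm]; exact mul_le_mul_of_nonneg_right (hM _) (hB0 ξ)
  linarith

lemma sigmoid_deriv_lower {x : ℝ} (hx : |x| ≤ 2) :
    1 / 20 ≤ Real.sigmoid x * (1 - Real.sigmoid x) := by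
  rw [← Real.sigmoid_neg, Real.sigmoid_def, Real.sigmoid_def, neg_neg, ← mul_inv]
  have h2 : Real.exp 2 ≤ 8 := by
    have := Real.exp_one_lt_d9
    rw [show (2 : ℝ) = 1 + 1 by norm_num, Real.exp_add]
    nlinarith [Real.exp_pos 1]
  obtain ⟨ha, hb⟩ := abs_le.1 hx
  have h3 : Real.exp x ≤ 8 := (Real.exp_le_exp.2 hb).trans h2
  have h4 : Real.exp (-x) ≤ 8 := (Real.exp_le_exp.2 (by linarith)).trans h2
  have h5 : Real.exp (-x) * Real.exp x = 1 := by rw [← Real.exp_add]; simp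
  rw [one_div]
  apply inv_anti₀ (by positivity)
  nlinarith [Real.exp_pos x, Real.exp_pos (-x)]

/-- Anti-concentration of the maximum of a Gaussian vector with variances in `[c₁, C₁]`. -/
lemma anti_concentration {N p : ℕ} (hp : 2 ≤ p) (V : Fin N → Fin p → ℝ) {c₁ C₁ : ℝ} (hc : 0 < c₁)
    (hV : ∀ j, c₁ ≤ ∑ l, V l j * V l j) (hV' : ∀ j, ∑ l, V l j * V l j ≤ C₁)
    {ε : ℝ} (hε : 0 < ε) (s : ℝ) :
    (gaussPi N).real {ξ | (∀ j, lin V ξ j ≤ s + 2 * ε) ∧ ¬ ∀ j, lin V ξ j ≤ s} ≤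
      20 / c₁ * (2 + C₁ / 2) * (ε * Real.sqrt (Real.log p)) := by
  have hp0 : 0 < p := by omega
  have hp2 : (2 : ℝ) ≤ p := by exact_mod_cast hp
  have hL2 : Real.log 2 ≤ Real.log p := Real.log_le_log (by norm_num) hp2
  have hl2 := Real.log_two_gt_d9
  set L := Real.log p with hL
  have hL0 : 0 < L := by linarith
  set β := 2 * L / ε with hβdef
  have hβ : 0 < β := by positivity
  have hβε : 1 / ε ≤ β := by rw [hβdef]; gcongr; linarith
  set t := s + 3 / 2 * ε with ht
  set g : ℝ → ℝ := fun x => ε * Real.sigmoid ((x - t) / ε) with hg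
  set g' : ℝ → ℝ := fun x => Real.sigmoid ((x - t) / ε) * (1 - Real.sigmoid ((x - t) / ε)) with hg'
  have hs0 : ∀ x, 0 ≤ Real.sigmoid x := Real.sigmoid_nonneg
  have hs1 : ∀ x, Real.sigmoid x ≤ 1 := Real.sigmoid_le_one
  have hsc : Continuous fun x => Real.sigmoid ((x - t) / ε) :=
    _root_.continuous_sigmoid.comp (by fun_prop)
  have hder : ∀ x, HasDerivAt g (g' x) x := by
    intro x
    have h1 : HasDerivAt (fun x => (x - t) / ε) (1 / ε) x :=
      ((hasDerivAt_id' x).sub_const t).div_const ε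
    refine (((Real.hasDerivAt_sigmoid _).comp x h1).const_mul ε).congr_deriv ?_
    simp only [hg']
    field_simp
  have h0 : ∀ x, 0 ≤ g' x := fun x => mul_nonneg (hs0 _) (by linarith [hs1 ((x - t) / ε)])
  have hle : ∀ x, g' x ≤ β * g x := by
    intro x
    have h1 : g' x ≤ Real.sigmoid ((x - t) / ε) := by
      have := hs0 ((x - t) / ε)
      simp only [hg']; nlinarith
    have h2 : 1 / ε * g x ≤ β * g x :=
      mul_le_mul_of_nonneg_right hβε (mul_nonneg hε.le (hs0 _))
    have h3 : 1 / ε * g x = Real.sigmoid ((x - t) / ε) := by simp only [hg]; field_simp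
    linarith
  have hM : ∀ x, g x ≤ ε := fun x => by
    simp only [hg]; exact mul_le_of_le_one_right hε.le (hs1 _)
  obtain ⟨B, hB, hB0, hBle, hBint⟩ := exists_envelope hp0 V C₁ hV' (Real.sqrt L)
    (Real.sqrt_pos.2 hL0)
  have hg'c : Continuous g' := hsc.mul (continuous_const.sub hsc)
  have key := anti_core hp0 V c₁ hV hβ hder hg'c h0 hle hM hB hB0 hBle
  have hBf : ∫ ξ, B ξ ∂(gaussPi N) ≤ (2 + C₁ / 2) * Real.sqrt L := by
    refine hBint.trans ?_
    rw [Real.sq_sqrt hL0.le, div_le_iff₀ (Real.sqrt_pos.2 hL0), mul_assoc,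
      Real.mul_self_sqrt hL0.le, Real.log_mul (by norm_num) (by positivity)]
    linarith
  set E : Set (Fin N → ℝ) := {ξ | (∀ j, lin V ξ j ≤ s + 2 * ε) ∧ ¬ ∀ j, lin V ξ j ≤ s} with hE
  have hcj : ∀ j, Continuous fun ξ => lin V ξ j := fun j =>
    (continuous_apply j).comp (continuous_lin V)
  have hEm : MeasurableSet E := by
    have h1 : ∀ u : ℝ, MeasurableSet {ξ : Fin N → ℝ | ∀ j, lin V ξ j ≤ u} := fun u => by
      rw [Set.ofPred_forall]
      exact MeasurableSet.iInter fun j => measurableSet_le (hcj j).measurable measurable_const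
    exact (h1 _).inter (h1 _).compl
  have hlow : (1 / 20) * (gaussPi N).real E ≤ ∫ ξ, g' (smax β (lin V ξ)) ∂(gaussPi N) := by
    rw [← integral_indicator_one hEm, ← integral_const_mul]
    refine integral_mono ?_ ?_ fun ξ => ?_
    · exact ((integrable_const (1 : ℝ)).indicator hEm).const_mul _
    · refine integrable_of_bdd (hg'c.comp ((continuous_smax hp0 hβ).comp (continuous_lin V))) 1
        fun ξ => ?_
      have := h0 (smax β (lin V ξ))
      show |g' (smax β (lin V ξ))| ≤ 1
      rw [abs_of_nonneg this]
      simp only [hg']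
      have a1 := hs0 ((smax β (lin V ξ) - t) / ε)
      have a2 := hs1 ((smax β (lin V ξ) - t) / ε)
      nlinarith
    · by_cases hξ : ξ ∈ E
      · simp only [Set.indicator_of_mem hξ, Pi.one_apply, mul_one]
        obtain ⟨h1, h2⟩ := hξ
        push Not at h2
        obtain ⟨j, hj⟩ := h2
        have u1 := smax_le hp0 hβ (lin V ξ) _ h1
        have u2 := le_smax hβ j (lin V ξ)
        have u3 : Real.log p / β = ε / 2 := by rw [hβdef, ← hL]; field_simp
        rw [u3] at u1
        refine sigmoid_deriv_lower ?_
        rw [abs_div, abs_of_pos hε, div_le_iff₀ hε, abs_le]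
        constructor <;> linarith
      · simp only [Set.indicator_of_notMem hξ, mul_zero]
        exact h0 _
  have hfin : c₁ * ((1 / 20) * (gaussPi N).real E) ≤ ε * ((2 + C₁ / 2) * Real.sqrt L) :=
    (mul_le_mul_of_nonneg_left hlow hc.le).trans
      (key.trans (mul_le_mul_of_nonneg_left hBf hε.le))
  have : (gaussPi N).real E = 20 / c₁ * (c₁ * ((1 / 20) * (gaussPi N).real E)) := by
    field_simp
  rw [this]
  calc _ ≤ 20 / c₁ * (ε * ((2 + C₁ / 2) * Real.sqrt L)) :=
        mul_le_mul_of_nonneg_left hfin (by positivity)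
    _ = _ := by ring

/-! ### Gaussian comparison in Kolmogorov distance -/

/-- A `C²` step from `0` to `1` on `[0, 1]` with bounded derivatives. -/
lemma exists_step : ∃ (B : ℝ) (T T1 T2 : ℝ → ℝ), 0 < B ∧ (∀ x, HasDerivAt T (T1 x) x) ∧
    (∀ x, HasDerivAt T1 (T2 x) x) ∧ Continuous T2 ∧ (∀ x, 0 ≤ T x) ∧ (∀ x, T x ≤ 1) ∧
    (∀ x ≤ 0, T x = 0) ∧ (∀ x, 1 ≤ x → T x = 1) ∧ (∀ x, |T1 x| ≤ B) ∧ (∀ x, |T2 x| ≤ B) := by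
  have hcd : ContDiff ℝ 2 Real.smoothTransition := Real.smoothTransition.contDiff
  have hcd1 : ContDiff ℝ 1 (deriv Real.smoothTransition) := by
    have h : ContDiff ℝ (1 + 1) Real.smoothTransition := by
      rw [one_add_one_eq_two]; exact hcd
    exact (contDiff_succ_iff_deriv.1 h).2.2
  have hc1 : Continuous (deriv Real.smoothTransition) := hcd1.continuous
  have hc2 : Continuous (deriv (deriv Real.smoothTransition)) := hcd1.continuous_deriv le_rfl
  have hneg : ∀ x < 0, deriv Real.smoothTransition x = 0 := by
    intro x hx
    have : Real.smoothTransition =ᶠ[nhds x] fun _ => 0 := by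
      filter_upwards [Iio_mem_nhds hx] with y hy
      exact Real.smoothTransition.zero_of_nonpos (le_of_lt hy)
    rw [this.deriv_eq]; simp
  have hpos : ∀ x, 1 < x → deriv Real.smoothTransition x = 0 := by
    intro x hx
    have : Real.smoothTransition =ᶠ[nhds x] fun _ => 1 := by
      filter_upwards [Ioi_mem_nhds hx] with y hy
      exact Real.smoothTransition.one_of_one_le (le_of_lt hy)
    rw [this.deriv_eq]; simp
  have hneg2 : ∀ x < 0, deriv (deriv Real.smoothTransition) x = 0 := by
    intro x hx
    have : deriv Real.smoothTransition =ᶠ[nhds x] fun _ => 0 := by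
      filter_upwards [Iio_mem_nhds hx] with y hy
      exact hneg y hy
    rw [this.deriv_eq]; simp
  have hpos2 : ∀ x, 1 < x → deriv (deriv Real.smoothTransition) x = 0 := by
    intro x hx
    have : deriv Real.smoothTransition =ᶠ[nhds x] fun _ => 0 := by
      filter_upwards [Ioi_mem_nhds hx] with y hy
      exact hpos y hy
    rw [this.deriv_eq]; simp
  obtain ⟨B1, hB1⟩ := (isCompact_Icc (a := (0 : ℝ)) (b := 1)).exists_bound_of_continuousOn
    hc1.continuousOn
  obtain ⟨B2, hB2⟩ := (isCompact_Icc (a := (0 : ℝ)) (b := 1)).exists_bound_of_continuousOn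
    hc2.continuousOn
  have hbd : ∀ (f : ℝ → ℝ) (b : ℝ), (∀ x ∈ Set.Icc (0 : ℝ) 1, ‖f x‖ ≤ b) → (∀ x < 0, f x = 0) →
      (∀ x, 1 < x → f x = 0) → ∀ x, |f x| ≤ |b| := by
    intro f b hb hn hp x
    by_cases h0 : x < 0
    · rw [hn x h0]; simp
    by_cases h1 : 1 < x
    · rw [hp x h1]; simp
    exact (hb x ⟨not_lt.1 h0, not_lt.1 h1⟩).trans (le_abs_self _)
  refine ⟨|B1| + |B2| + 1, Real.smoothTransition, deriv Real.smoothTransition,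
    deriv (deriv Real.smoothTransition), by positivity,
    fun x => (hcd.differentiable (by norm_num) x).hasDerivAt,
    fun x => (hcd1.differentiable (by norm_num) x).hasDerivAt, hc2,
    Real.smoothTransition.nonneg, Real.smoothTransition.le_one,
    fun x hx => Real.smoothTransition.zero_of_nonpos hx,
    fun x hx => Real.smoothTransition.one_of_one_le hx, fun x => ?_, fun x => ?_⟩
  · have := hbd _ _ hB1 hneg hpos x
    have := abs_nonneg B2
    linarith
  · have := hbd _ _ hB2 hneg2 hpos2 x
    have := abs_nonneg B1
    linarith

lemma measurableSet_lin_le {N p : ℕ} (V : Fin N → Fin p → ℝ) (u : ℝ) :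
    MeasurableSet {ξ : Fin N → ℝ | ∀ j, lin V ξ j ≤ u} := by
  rw [Set.ofPred_forall]
  exact MeasurableSet.iInter fun j => measurableSet_le
    ((continuous_apply j).comp (continuous_lin V)).measurable measurable_const

/-- Comparison of Gaussian maxima up to a shift `2ε` of the threshold, by applying `slepian` to a
smoothed indicator of `{smax ≤ t}` at smoothing level `β = 2 log p / ε`. -/
lemma smooth_cmp : ∃ B : ℝ, 0 < B ∧ ∀ (N p : ℕ) (_ : 2 ≤ p) (U V : Fin N → Fin p → ℝ)
    (_ : ∀ j k, ∑ l, U l j * V l k = 0) (Δ : ℝ) (_ : 0 ≤ Δ)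
    (_ : ∀ j k, |∑ l, U l j * U l k - ∑ l, V l j * V l k| ≤ Δ) (ε : ℝ) (_ : 0 < ε) (t : ℝ),
    (gaussPi N).real {ξ | ∀ j, lin U ξ j ≤ t} ≤
      (gaussPi N).real {ξ | ∀ j, lin V ξ j ≤ t + 2 * ε} + B * (Δ * Real.log p / ε ^ 2) := by
  obtain ⟨B, T, T1, T2, hB, hT, hT1, hT2c, hT0, hTle, hTn, hTp, hb1, hb2⟩ := exists_step
  refine ⟨6 * B, by positivity, ?_⟩
  intro N p hp U V horth Δ hΔ0 hΔ ε hε t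
  have hp0 : 0 < p := by omega
  have hp2 : (2 : ℝ) ≤ p := by exact_mod_cast hp
  have hL2 : Real.log 2 ≤ Real.log p := Real.log_le_log (by norm_num) hp2
  have hl2 := Real.log_two_gt_d9
  set L := Real.log p with hL
  have hL0 : 0 < L := by linarith
  set β := 2 * L / ε with hβdef
  have hβ : 0 < β := by positivity
  set s := t + ε with hs
  set z : ℝ → ℝ := fun x => (x - s) / ε with hz
  have hzd : ∀ x, HasDerivAt z (1 / ε) x := fun x =>
    ((hasDerivAt_id' x).sub_const s).div_const ε
  have hzc : Continuous z := by simp only [hz]; fun_prop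
  set g : ℝ → ℝ := fun x => 1 - T (z x) with hg
  set g1 : ℝ → ℝ := fun x => -(T1 (z x) * (1 / ε)) with hg1
  set g2 : ℝ → ℝ := fun x => -(T2 (z x) * (1 / ε) * (1 / ε)) with hg2
  have hd : ∀ x, HasDerivAt g (g1 x) x := fun x => by
    simpa [hg1] using ((hT (z x)).comp x (hzd x)).const_sub 1
  have hd1 : ∀ x, HasDerivAt g1 (g2 x) x := fun x =>
    (((hT1 (z x)).comp x (hzd x)).mul_const (1 / ε)).neg
  have hg1b : ∀ x, |g1 x| ≤ B / ε := fun x => by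
    simp only [hg1]
    rw [abs_neg, abs_mul, abs_of_pos (by positivity : 0 < 1 / ε), mul_one_div]
    gcongr; exact hb1 _
  have hg2b : ∀ x, |g2 x| ≤ B / ε ^ 2 := fun x => by
    simp only [hg2]
    rw [abs_neg, abs_mul, abs_mul, abs_of_pos (by positivity : 0 < 1 / ε), mul_one_div, mul_one_div,
      div_div, ← sq]
    gcongr; exact hb2 _
  have hg0 : ∀ x, 0 ≤ g x := fun x => by simp only [hg]; linarith [hTle (z x)]
  have hg1' : ∀ x, g x ≤ 1 := fun x => by simp only [hg]; linarith [hT0 (z x)]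
  have hgc : Continuous g := continuous_iff_continuousAt.2 fun x => (hd x).continuousAt
  have hg1c : Continuous g1 := continuous_iff_continuousAt.2 fun x => (hd1 x).continuousAt
  have hg2c : Continuous g2 := by
    simp only [hg2]
    exact (((hT2c.comp hzc).mul continuous_const).mul continuous_const).neg
  have hsc := continuous_smax hp0 hβ
  set h1 : Fin p → (Fin p → ℝ) → ℝ := fun j y => g1 (smax β y) * wt β j y with hh1
  set h2 : Fin p → Fin p → (Fin p → ℝ) → ℝ := fun j k y =>
    g2 (smax β y) * wt β k y * wt β j y +
      g1 (smax β y) * (β * wt β j y * ((if k = j then 1 else 0) - wt β k y)) with hh2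
  have hgrad : HasGrad (fun y : Fin p → ℝ => g (smax β y)) h1 :=
    (hasGrad_smax hp0 hβ.ne').comp fun y => hd (smax β y)
  have hgrad1 : ∀ j, HasGrad (h1 j) (h2 j) := fun j =>
    ((hasGrad_smax hp0 hβ.ne').comp fun y => hd1 (smax β y)).mul (hasGrad_wt hp0 β j)
  have hc2 : ∀ j k, Continuous (h2 j k) := by
    intro j k
    have a1 := continuous_wt hp0 β j
    have a2 := continuous_wt hp0 β k
    have a3 := hg1c.comp hsc
    have a4 := hg2c.comp hsc
    exact ((a4.mul a2).mul a1).add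
      (a3.mul ((continuous_const.mul a1).mul (continuous_const.sub a2)))
  have hsum : ∀ y, ∑ j, ∑ k, |h2 j k y| ≤ 6 * B * L / ε ^ 2 := by
    intro y
    have hterm : ∀ j k, |h2 j k y| ≤ B / ε ^ 2 * (wt β j y * wt β k y) +
        B / ε * β * (wt β j y * ((if k = j then 1 else 0) + wt β k y)) := by
      intro j k
      have w1 := wt_nonneg β j y
      have w2 := wt_nonneg β k y
      simp only [hh2]
      refine (abs_add_le _ _).trans (add_le_add ?_ ?_)
      · rw [abs_mul, abs_mul, abs_of_nonneg w1, abs_of_nonneg w2, mul_assoc, mul_comm (wt β k y)]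
        exact mul_le_mul_of_nonneg_right (hg2b _) (mul_nonneg w1 w2)
      · rw [abs_mul, abs_mul, abs_mul, abs_of_pos hβ, abs_of_nonneg w1, mul_assoc (B / ε)]
        refine mul_le_mul (hg1b _) ?_ (by positivity) (by positivity)
        rw [mul_assoc]
        refine mul_le_mul_of_nonneg_left (mul_le_mul_of_nonneg_left ?_ w1) hβ.le
        rw [abs_le]; split_ifs <;> constructor <;> linarith
    have hs1 := wt_sum hp0 β y
    calc ∑ j, ∑ k, |h2 j k y| ≤ ∑ j, ∑ k, (B / ε ^ 2 * (wt β j y * wt β k y) +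
        B / ε * β * (wt β j y * ((if k = j then 1 else 0) + wt β k y))) :=
          Finset.sum_le_sum fun j _ => Finset.sum_le_sum fun k _ => hterm j k
      _ = B / ε ^ 2 + 2 * (B / ε * β) := by
          simp_rw [Finset.sum_add_distrib, ← Finset.mul_sum, Finset.sum_add_distrib, hs1]
          simp only [Finset.sum_ite_eq', Finset.mem_univ, if_true, mul_one]
          rw [← Finset.sum_mul, hs1]
          ring
      _ ≤ 6 * B * L / ε ^ 2 := by
          rw [hβdef]
          have : B / ε ^ 2 + 2 * (B / ε * (2 * L / ε)) = B / ε ^ 2 * (1 + 4 * L) := by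
            field_simp; ring
          rw [this, show 6 * B * L / ε ^ 2 = B / ε ^ 2 * (6 * L) by ring]
          refine mul_le_mul_of_nonneg_left (by linarith) (by positivity)
  set H := 6 * B * L / ε ^ 2 with hH
  have hH0 : 0 ≤ H := by positivity
  have hk2 : ∀ j k y, |h2 j k y| ≤ 1 + B / ε + H := by
    intro j k y
    have a1 := Finset.single_le_sum (f := fun k => |h2 j k y|) (fun _ _ => abs_nonneg _)
      (Finset.mem_univ k)
    have a2 := Finset.single_le_sum (f := fun j => ∑ k, |h2 j k y|)
      (fun _ _ => Finset.sum_nonneg fun _ _ => abs_nonneg _) (Finset.mem_univ j)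
    have a3 := hsum y
    have a4 : 0 ≤ B / ε := by positivity
    linarith
  have hk1 : ∀ j y, |h1 j y| ≤ 1 + B / ε + H := by
    intro j y
    simp only [hh1]
    rw [abs_mul, abs_of_nonneg (wt_nonneg β j y)]
    have := mul_le_mul (hg1b (smax β y)) (wt_le_one hp0 β j y) (wt_nonneg β j y) (by positivity)
    linarith
  have hk0 : ∀ y : Fin p → ℝ, |g (smax β y)| ≤ 1 + B / ε + H := by
    intro y
    rw [abs_of_nonneg (hg0 _)]
    have := hg1' (smax β y)
    have a4 : 0 ≤ B / ε := by positivity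
    linarith
  have key := slepian U V horth Δ hΔ0 hΔ hgrad hgrad1 hc2 hk0 hk1 hk2 hsum
  have hInt : ∀ W : Fin N → Fin p → ℝ,
      Integrable (fun ξ => g (smax β (lin W ξ))) (gaussPi N) := fun W =>
    integrable_of_bdd (hgc.comp (hsc.comp (continuous_lin W))) _ fun ξ => hk0 _
  have hleft : (gaussPi N).real {ξ | ∀ j, lin U ξ j ≤ t} ≤
      ∫ ξ, g (smax β (lin U ξ)) ∂(gaussPi N) := by
    rw [← integral_indicator_one (measurableSet_lin_le U t)]
    refine integral_mono ((integrable_const (1 : ℝ)).indicator (measurableSet_lin_le U t))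
      (hInt U) fun ξ => ?_
    by_cases hξ : ξ ∈ {ξ | ∀ j, lin U ξ j ≤ t}
    · simp only [Set.indicator_of_mem hξ, Pi.one_apply]
      have u1 := smax_le hp0 hβ (lin U ξ) _ hξ
      have u3 : Real.log p / β = ε / 2 := by rw [hβdef, ← hL]; field_simp
      simp only [hg]
      rw [hTn _ (by simp only [hz]; exact div_nonpos_of_nonpos_of_nonneg (by linarith) hε.le)]
      simp
    · simp only [Set.indicator_of_notMem hξ]
      exact hg0 _
  have hright : ∫ ξ, g (smax β (lin V ξ)) ∂(gaussPi N) ≤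
      (gaussPi N).real {ξ | ∀ j, lin V ξ j ≤ t + 2 * ε} := by
    rw [← integral_indicator_one (measurableSet_lin_le V _)]
    refine integral_mono (hInt V) ((integrable_const (1 : ℝ)).indicator
      (measurableSet_lin_le V _)) fun ξ => ?_
    by_cases hξ : ξ ∈ {ξ | ∀ j, lin V ξ j ≤ t + 2 * ε}
    · simp only [Set.indicator_of_mem hξ, Pi.one_apply]
      exact hg1' _
    · simp only [Set.indicator_of_notMem hξ]
      simp only [Set.mem_ofPred_eq, not_forall, not_le] at hξ
      obtain ⟨j, hj⟩ := hξ
      have u2 := le_smax hβ j (lin V ξ)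
      simp only [hg]
      rw [hTp _ (by simp only [hz]; rw [le_div_iff₀ hε]; linarith)]
      simp
  have := (abs_le.1 key).2
  have e : Δ * H = 6 * B * (Δ * L / ε ^ 2) := by rw [hH]; ring
  linarith

/-- Kolmogorov distance between the maxima of two independent Gaussian vectors. -/
lemma kolmogorov_cmp (c₁ C₁ : ℝ) (hc : 0 < c₁) (hC : c₁ ≤ C₁) : ∃ K : ℝ, 0 < K ∧
    ∀ (N p : ℕ) (_ : 2 ≤ p) (U V : Fin N → Fin p → ℝ)
    (_ : ∀ j k, ∑ l, U l j * V l k = 0)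
    (_ : ∀ j, c₁ ≤ ∑ l, V l j * V l j) (_ : ∀ j, ∑ l, V l j * V l j ≤ C₁)
    (Δ : ℝ) (_ : 0 ≤ Δ)
    (_ : ∀ j k, |∑ l, U l j * U l k - ∑ l, V l j * V l k| ≤ Δ) (ε : ℝ) (_ : 0 < ε) (t : ℝ),
    |(gaussPi N).real {ξ | ∀ j, lin U ξ j ≤ t} - (gaussPi N).real {ξ | ∀ j, lin V ξ j ≤ t}| ≤
      K * (Δ * Real.log p / ε ^ 2 + ε * Real.sqrt (Real.log p)) := by
  obtain ⟨B, hB, hcmp⟩ := smooth_cmp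
  have hA : 0 < 20 / c₁ * (2 + C₁ / 2) := by
    have : 0 < C₁ := hc.trans_le hC
    positivity
  set A := 20 / c₁ * (2 + C₁ / 2) with hAdef
  refine ⟨A + B, by positivity, ?_⟩
  intro N p hp U V horth hV hV' Δ hΔ0 hΔ ε hε t
  have hL0 : 0 ≤ Real.log p := Real.log_natCast_nonneg p
  have hanti : ∀ s : ℝ, (gaussPi N).real {ξ | ∀ j, lin V ξ j ≤ s + 2 * ε} ≤
      (gaussPi N).real {ξ | ∀ j, lin V ξ j ≤ s} + A * (ε * Real.sqrt (Real.log p)) := by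
    intro s
    have h1 := anti_concentration hp V hc hV hV' hε s
    rw [← hAdef] at h1
    have h2 : {ξ : Fin N → ℝ | ∀ j, lin V ξ j ≤ s + 2 * ε} ⊆ {ξ | ∀ j, lin V ξ j ≤ s} ∪
        {ξ | (∀ j, lin V ξ j ≤ s + 2 * ε) ∧ ¬ ∀ j, lin V ξ j ≤ s} := by
      intro ξ hξ
      by_cases h : ∀ j, lin V ξ j ≤ s
      · exact Or.inl h
      · exact Or.inr ⟨hξ, h⟩
    have h3 := (measureReal_mono h2 (by finiteness)).trans
      (measureReal_union_le (μ := gaussPi N) _ _)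
    linarith
  have u1 := hcmp N p hp U V horth Δ hΔ0 hΔ ε hε t
  have u2 := hcmp N p hp V U (fun j k => by
    rw [← horth k j]; exact Finset.sum_congr rfl fun l _ => mul_comm _ _) Δ hΔ0
    (fun j k => by rw [abs_sub_comm]; exact hΔ j k) ε hε (t - 2 * ε)
  have a1 := hanti t
  have a2 := hanti (t - 2 * ε)
  rw [sub_add_cancel] at u2 a2
  have p1 : 0 ≤ Δ * Real.log p / ε ^ 2 := by positivity
  have p2 : 0 ≤ ε * Real.sqrt (Real.log p) := by positivity
  rw [abs_le]
  constructor <;> nlinarith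

open scoped MatrixOrder in
/-- Comparison of the conditional law of the bootstrap maximum with that of the Gaussian
vector. The two are realised as orthogonal linear images of one standard Gaussian vector of
dimension `m + p`. -/
lemma ks_bound (c₁ C₁ : ℝ) (hc : 0 < c₁) (hC : c₁ ≤ C₁) : ∃ K : ℝ, 0 < K ∧
    ∀ (m p : ℕ) (_ : 2 ≤ p) (W : Fin m → Fin p → ℝ) (S : Fin p → Fin p → ℝ)
    (_ : (Matrix.of S).PosSemidef)
    (_ : ∀ j, c₁ ≤ S j j) (_ : ∀ j, S j j ≤ C₁)
    (ν : Measure (Fin p → ℝ)) (_ : IsProbabilityMeasure ν)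
    (_ : ∀ a : Fin p → ℝ, Measure.map (fun y => ∑ j, a j * y j) ν =
          gaussianReal 0 (Real.toNNReal (∑ j, ∑ k, a j * a k * S j k)))
    (Δ : ℝ) (_ : 0 ≤ Δ)
    (_ : ∀ j k, |∑ l, W l j * W l k - S j k| ≤ Δ) (ε : ℝ) (_ : 0 < ε) (t : ℝ),
    |(gaussPi m).real {e | ∀ j, lin W e j ≤ t} - ν.real {y | ∀ j, y j ≤ t}| ≤
      K * (Δ * Real.log p / ε ^ 2 + ε * Real.sqrt (Real.log p)) := by
  obtain ⟨K, hK, hcmp⟩ := kolmogorov_cmp c₁ C₁ hc hC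
  refine ⟨K, hK, ?_⟩
  intro m p hp W S hS hS1 hS2 ν hν hνg Δ hΔ0 hΔ ε hε t
  obtain ⟨A, hA'⟩ : ∃ A : Fin p → Fin p → ℝ, ∀ j k, ∑ l, A l j * A l k = S j k := by
    obtain ⟨A, hA⟩ := CStarAlgebra.nonneg_iff_eq_star_mul_self.mp hS.nonneg
    refine ⟨A, fun j k => ?_⟩
    have := congrFun (congrFun hA j) k
    simpa [Matrix.mul_apply] using this.symm
  set U : Fin (m + p) → Fin p → ℝ := Fin.append W (fun _ _ => 0) with hU
  set V : Fin (m + p) → Fin p → ℝ := Fin.append (fun _ _ => 0) A with hV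
  have hVS : ∀ j k, ∑ l, V l j * V l k = S j k := by
    intro j k
    rw [Fin.sum_univ_add]
    simp [hV, hA']
  have hUW : ∀ j k, ∑ l, U l j * U l k = ∑ l, W l j * W l k := by
    intro j k
    rw [Fin.sum_univ_add]
    simp [hU]
  have horth : ∀ j k, ∑ l, U l j * V l k = 0 := by
    intro j k
    rw [Fin.sum_univ_add]
    simp [hU, hV]
  have hms : MeasurableSet {y : Fin p → ℝ | ∀ j, y j ≤ t} := by
    rw [Set.ofPred_forall]
    exact MeasurableSet.iInter fun j => measurableSet_le (measurable_pi_apply j) measurable_const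
  have e1 : ν.real {y | ∀ j, y j ≤ t} = (gaussPi (m + p)).real {ξ | ∀ j, lin V ξ j ≤ t} := by
    rw [eq_map_lin V S hVS ν hνg, map_measureReal_apply (continuous_lin V).measurable hms]
    rfl
  have : IsProbabilityMeasure (Measure.map (lin W) (gaussPi m)) :=
    Measure.isProbabilityMeasure_map (continuous_lin W).aemeasurable
  have e2 : (gaussPi m).real {e | ∀ j, lin W e j ≤ t} =
      (gaussPi (m + p)).real {ξ | ∀ j, lin U ξ j ≤ t} := by
    have h := eq_map_lin U _ hUW (Measure.map (lin W) (gaussPi m))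
      (map_lin_proj W _ fun _ _ => rfl)
    have h' := congrArg (fun μ => μ.real {y : Fin p → ℝ | ∀ j, y j ≤ t}) h
    simp only [map_measureReal_apply (continuous_lin U).measurable hms,
      map_measureReal_apply (continuous_lin W).measurable hms] at h'
    exact h'
  rw [e1, e2]
  refine hcmp (m + p) p hp U V horth (fun j => by rw [hVS]; exact hS1 j)
    (fun j => by rw [hVS]; exact hS2 j) Δ hΔ0 (fun j k => by rw [hUW, hVS]; exact hΔ j k) ε hε t

/-! ### Decoupling under `β`-mixing -/

section Decoupling

variable {Ω : Type*} (m₁ m₂ : MeasurableSpace Ω) [mΩ : MeasurableSpace Ω] (P : Measure Ω)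
  [IsProbabilityMeasure P]

lemma sum_partition {I : ℕ} (A : Fin I → Set Ω) (hA : ∀ i, MeasurableSet (A i))
    (hd : Pairwise (Function.onFun Disjoint A)) (hu : (⋃ i, A i) = Set.univ) (s : Set Ω)
    (hs : MeasurableSet s) :
    ∑ i, P.real (s ∩ A i) = P.real s := by
  have h : s = ⋃ i, s ∩ A i := by rw [← Set.inter_iUnion, hu, Set.inter_univ]
  conv_rhs => rw [h]
  rw [measureReal_iUnion_fintype (fun i j hij => (hd hij).mono Set.inter_subset_right
    Set.inter_subset_right) (fun i => hs.inter (hA i))]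

lemma bddAbove_beta (h₁ : m₁ ≤ mΩ) (h₂ : m₂ ≤ mΩ) :
    BddAbove {x : ℝ | ∃ (I J : ℕ) (A : Fin I → Set Ω) (B : Fin J → Set Ω),
      (∀ i, MeasurableSet[m₁] (A i)) ∧ Pairwise (Function.onFun Disjoint A) ∧
      (⋃ i, A i) = Set.univ ∧
      (∀ j, MeasurableSet[m₂] (B j)) ∧ Pairwise (Function.onFun Disjoint B) ∧
      (⋃ j, B j) = Set.univ ∧
      x = ∑ i, ∑ j, |(P (A i ∩ B j)).toReal - (P (A i)).toReal * (P (B j)).toReal|} := by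
  refine ⟨2, ?_⟩
  rintro x ⟨I, J, A, B, hA, hAd, hAu, hB, hBd, hBu, rfl⟩
  have hA' : ∀ i, MeasurableSet (A i) := fun i => h₁ _ (hA i)
  have hB' : ∀ j, MeasurableSet (B j) := fun j => h₂ _ (hB j)
  have sA : ∑ i, P.real (A i) = 1 := by
    have := sum_partition P A hA' hAd hAu Set.univ MeasurableSet.univ
    simpa using this
  have sB : ∑ j, P.real (B j) = 1 := by
    have := sum_partition P B hB' hBd hBu Set.univ MeasurableSet.univ
    simpa using this
  calc ∑ i, ∑ j, |(P (A i ∩ B j)).toReal - (P (A i)).toReal * (P (B j)).toReal|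
      ≤ ∑ i, ∑ j, (P.real (A i ∩ B j) + P.real (A i) * P.real (B j)) := by
        refine Finset.sum_le_sum fun i _ => Finset.sum_le_sum fun j _ => ?_
        refine (abs_sub _ _).trans (le_of_eq ?_)
        rw [abs_of_nonneg (by positivity), abs_of_nonneg (by positivity)]
        rfl
    _ = 2 := by
        simp_rw [Finset.sum_add_distrib, sum_partition P B hB' hBd hBu _ (hA' _),
          ← Finset.mul_sum, sB, mul_one, sA]
        norm_num

/-- The partition form of the dependence coefficient dominates one-sided discrepancies: the
discrepancies sum to zero, so their positive part is half the total variation. -/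
lemma beta_finite (h₁ : m₁ ≤ mΩ) (h₂ : m₂ ≤ mΩ) {I J : ℕ}
    (σ : Ω → Fin I) (τ : Ω → Fin J) (hσ : ∀ i, MeasurableSet[m₁] (σ ⁻¹' {i}))
    (hτ : ∀ j, MeasurableSet[m₂] (τ ⁻¹' {j})) (K : Finset (Fin I × Fin J)) :
    ∑ x ∈ K, (P.real (σ ⁻¹' {x.1} ∩ τ ⁻¹' {x.2}) -
      P.real (σ ⁻¹' {x.1}) * P.real (τ ⁻¹' {x.2})) ≤ betaDep P m₁ m₂ := by
  have hdσ : Pairwise (Function.onFun Disjoint fun i => σ ⁻¹' {i}) := fun i j hij =>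
    Disjoint.preimage σ (by simpa using hij)
  have hdτ : Pairwise (Function.onFun Disjoint fun i => τ ⁻¹' {i}) := fun i j hij =>
    Disjoint.preimage τ (by simpa using hij)
  have huσ : (⋃ i, σ ⁻¹' {i}) = Set.univ := by ext ω; simp
  have huτ : (⋃ i, τ ⁻¹' {i}) = Set.univ := by ext ω; simp
  have hσ' : ∀ i, MeasurableSet (σ ⁻¹' {i}) := fun i => h₁ _ (hσ i)
  have hτ' : ∀ i, MeasurableSet (τ ⁻¹' {i}) := fun i => h₂ _ (hτ i)
  set a : Fin I × Fin J → ℝ := fun x => P.real (σ ⁻¹' {x.1} ∩ τ ⁻¹' {x.2}) -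
      P.real (σ ⁻¹' {x.1}) * P.real (τ ⁻¹' {x.2}) with ha
  have sA : ∑ i, P.real (σ ⁻¹' {i}) = 1 := by
    simpa using sum_partition P _ hσ' hdσ huσ Set.univ MeasurableSet.univ
  have sB : ∑ i, P.real (τ ⁻¹' {i}) = 1 := by
    simpa using sum_partition P _ hτ' hdτ huτ Set.univ MeasurableSet.univ
  have hzero : ∑ x, a x = 0 := by
    rw [Fintype.sum_prod_type]
    simp_rw [ha, Finset.sum_sub_distrib, sum_partition P _ hτ' hdτ huτ _ (hσ' _),
      ← Finset.mul_sum, sB, mul_one, sub_self]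
  have hhalf : ∑ x ∈ K, a x ≤ (1 / 2) * ∑ x, |a x| := by
    calc ∑ x ∈ K, a x = ∑ x, if x ∈ K then a x else 0 := by simp
      _ ≤ ∑ x, (1 / 2) * (a x + |a x|) := by
          refine Finset.sum_le_sum fun x _ => ?_
          have := le_abs_self (a x)
          have := neg_abs_le (a x)
          split_ifs <;> linarith
      _ = (1 / 2) * ∑ x, |a x| := by
          rw [← Finset.mul_sum, Finset.sum_add_distrib, hzero, zero_add]
  refine hhalf.trans ?_
  unfold betaDep
  refine mul_le_mul_of_nonneg_left (le_csSup (bddAbove_beta m₁ m₂ P h₁ h₂) ?_) (by norm_num)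
  refine ⟨I, J, fun i => σ ⁻¹' {i}, fun j => τ ⁻¹' {j}, hσ, hdσ, huσ, hτ, hdτ, huτ, ?_⟩
  rw [Fintype.sum_prod_type]
  rfl

/-- Decoupling for finite unions of measurable rectangles. -/
lemma beta_rect (h₁ : m₁ ≤ mΩ) (h₂ : m₂ ≤ mΩ) {N : ℕ}
    (U V : Fin N → Set Ω) (hU : ∀ s, MeasurableSet[m₁] (U s)) (hV : ∀ s, MeasurableSet[m₂] (V s)) :
    P.real {ω | ∃ s, ω ∈ U s ∧ ω ∈ V s} ≤
      (P.prod P).real {x | ∃ s, x.1 ∈ U s ∧ x.2 ∈ V s} + betaDep P m₁ m₂ := by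
  let e := Fintype.equivFin (Finset (Fin N))
  -- The atoms of the algebras generated by the `U s` and by the `V s`.
  have hatom : ∀ (m : MeasurableSpace Ω) (W : Fin N → Set Ω), (∀ s, MeasurableSet[m] (W s)) →
      ∀ i, MeasurableSet[m] ((fun ω => e (Finset.univ.filter fun s => ω ∈ W s)) ⁻¹' {i}) := by
    intro m W hW i
    have : (fun ω => e (Finset.univ.filter fun s => ω ∈ W s)) ⁻¹' {i} =
        ⋂ s, (if s ∈ e.symm i then W s else (W s)ᶜ) := by
      ext ω
      simp only [Set.mem_preimage, Set.mem_singleton_iff, Set.mem_iInter]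
      rw [← Equiv.eq_symm_apply]
      constructor
      · intro h s
        rw [← h]
        by_cases hs : ω ∈ W s <;> simp [hs]
      · intro h
        ext s
        have := h s
        by_cases hs : s ∈ e.symm i <;> simp [hs] at this ⊢ <;> exact this
    rw [this]
    refine MeasurableSet.iInter fun s => ?_
    split_ifs
    · exact hW s
    · exact (hW s).compl
  set σ : Ω → Fin (Fintype.card (Finset (Fin N))) :=
    fun ω => e (Finset.univ.filter fun s => ω ∈ U s) with hσ
  set τ : Ω → Fin (Fintype.card (Finset (Fin N))) :=
    fun ω => e (Finset.univ.filter fun s => ω ∈ V s) with hτ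
  let K : Finset (Fin (Fintype.card (Finset (Fin N))) × Fin (Fintype.card (Finset (Fin N)))) :=
    Finset.univ.filter fun x => ∃ s, s ∈ e.symm x.1 ∧ s ∈ e.symm x.2
  have key := beta_finite m₁ m₂ P h₁ h₂ σ τ (hatom m₁ U hU) (hatom m₂ V hV) K
  have hσ' : ∀ i, MeasurableSet (σ ⁻¹' {i}) := fun i => h₁ _ (hatom m₁ U hU i)
  have hτ' : ∀ i, MeasurableSet (τ ⁻¹' {i}) := fun i => h₂ _ (hatom m₂ V hV i)
  rw [Finset.sum_sub_distrib] at key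
  have e1 : P.real {ω | ∃ s, ω ∈ U s ∧ ω ∈ V s} =
      ∑ x ∈ K, P.real (σ ⁻¹' {x.1} ∩ τ ⁻¹' {x.2}) := by
    have : {ω | ∃ s, ω ∈ U s ∧ ω ∈ V s} = ⋃ x ∈ K, σ ⁻¹' {x.1} ∩ τ ⁻¹' {x.2} := by
      ext ω
      simp [K, hσ, hτ]
    rw [this, measureReal_biUnion_finset]
    · intro x _ y _ hxy
      refine Set.disjoint_left.2 fun ω h1 h2 => hxy ?_
      exact Prod.ext (h1.1.symm.trans h2.1) (h1.2.symm.trans h2.2)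
    · exact fun x _ => (hσ' _).inter (hτ' _)
  have e2 : (P.prod P).real {x | ∃ s, x.1 ∈ U s ∧ x.2 ∈ V s} =
      ∑ x ∈ K, P.real (σ ⁻¹' {x.1}) * P.real (τ ⁻¹' {x.2}) := by
    have : {x : Ω × Ω | ∃ s, x.1 ∈ U s ∧ x.2 ∈ V s} =
        ⋃ x ∈ K, (σ ⁻¹' {x.1}) ×ˢ (τ ⁻¹' {x.2}) := by
      ext ω
      simp [K, hσ, hτ]
    rw [this, measureReal_biUnion_finset]
    · simp_rw [measureReal_prod_prod]
    · intro x _ y _ hxy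
      refine Set.disjoint_left.2 fun ω h1 h2 => hxy ?_
      exact Prod.ext (h1.1.symm.trans h2.1) (h1.2.symm.trans h2.2)
    · exact fun x _ => (hσ' _).prod (hτ' _)
  rw [e1, e2]
  linarith

/-- Decoupling for open sets, by exhausting with finite unions of open rectangles. -/
lemma beta_open {α γ : Type*} [TopologicalSpace α] [SecondCountableTopology α] [MeasurableSpace α]
    [BorelSpace α] [TopologicalSpace γ] [SecondCountableTopology γ] [MeasurableSpace γ]
    [BorelSpace γ] (h₁ : m₁ ≤ mΩ) (h₂ : m₂ ≤ mΩ)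
    (f : Ω → α) (g : Ω → γ) (hf : Measurable[m₁] f) (hg : Measurable[m₂] g)
    (C : Set (α × γ)) (hC : IsOpen C) :
    P {ω | (f ω, g ω) ∈ C} ≤
      ((P.map f).prod (P.map g)) C + ENNReal.ofReal (betaDep P m₁ m₂) := by
  have hf' : Measurable f := hf.mono h₁ le_rfl
  have hg' : Measurable g := hg.mono h₂ le_rfl
  have hprod : ((P.map f).prod (P.map g)) C = (P.prod P) {x | (f x.1, g x.2) ∈ C} := by
    rw [Measure.map_prod_map _ _ hf' hg', Measure.map_apply (hf'.prodMap hg') hC.measurableSet]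
    rfl
  rw [hprod]
  -- A sequence of open rectangles exhausting `C`.
  obtain ⟨U, V, hU, hV, hUV⟩ : ∃ (U : ℕ → Set α) (V : ℕ → Set γ), (∀ n, IsOpen (U n)) ∧
      (∀ n, IsOpen (V n)) ∧ C = ⋃ n, U n ×ˢ V n := by
    choose! u v hu hv hxu hxv huv using fun (x : α × γ) (hx : x ∈ C) =>
      isOpen_prod_iff.1 hC x.1 x.2 hx
    obtain ⟨T, hT, hTC⟩ := TopologicalSpace.isOpen_iUnion_countable
      (fun x : C => u x ×ˢ v x) (fun x => (hu x x.2).prod (hv x x.2))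
    have hCeq : C = ⋃ x : C, u x ×ˢ v x := by
      ext y
      simp only [Set.mem_iUnion]
      exact ⟨fun hy => ⟨⟨y, hy⟩, hxu y hy, hxv y hy⟩, fun ⟨x, hx⟩ => huv x x.2 hx⟩
    rcases T.eq_empty_or_nonempty with hTe | hTn
    · refine ⟨fun _ => ∅, fun _ => ∅, fun _ => isOpen_empty, fun _ => isOpen_empty, ?_⟩
      rw [hCeq, ← hTC, hTe]
      simp
    · obtain ⟨w, hw⟩ := hT.exists_eq_range hTn
      refine ⟨fun n => u (w n), fun n => v (w n), fun n => hu _ (w n).2, fun n => hv _ (w n).2, ?_⟩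
      refine hCeq.trans (hTC.symm.trans ?_)
      rw [hw]
      simp
  have hacc : {ω | (f ω, g ω) ∈ C} = ⋃ n, (f ⁻¹' U n ∩ g ⁻¹' V n) := by
    ext ω; rw [hUV]; simp
  rw [hacc]
  refine le_of_tendsto' (tendsto_measure_iUnion_accumulate (μ := P)) fun n => ?_
  have key := beta_rect m₁ m₂ P h₁ h₂ (N := n + 1) (fun s => f ⁻¹' U s) (fun s => g ⁻¹' V s)
    (fun s => hf (hU s).measurableSet) (fun s => hg (hV s).measurableSet)
  have s1 : Set.accumulate (fun n => f ⁻¹' U n ∩ g ⁻¹' V n) n =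
      {ω | ∃ s : Fin (n + 1), ω ∈ f ⁻¹' U s ∧ ω ∈ g ⁻¹' V s} := by
    ext ω
    simp only [Set.mem_accumulate]
    constructor
    · rintro ⟨y, hy, h⟩
      exact ⟨⟨y, by omega⟩, h⟩
    · rintro ⟨s, h⟩
      exact ⟨s, by omega, h⟩
  have s2 : {x : Ω × Ω | ∃ s : Fin (n + 1), x.1 ∈ f ⁻¹' U s ∧ x.2 ∈ g ⁻¹' V s} ⊆
      {x | (f x.1, g x.2) ∈ C} := by
    rintro x ⟨s, h⟩
    show (f x.1, g x.2) ∈ C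
    rw [hUV]
    exact Set.mem_iUnion.2 ⟨s, h⟩
  rw [s1]
  have k2 : P.real {ω | ∃ s : Fin (n + 1), ω ∈ f ⁻¹' U s ∧ ω ∈ g ⁻¹' V s} ≤
      (P.prod P).real {x | (f x.1, g x.2) ∈ C} + betaDep P m₁ m₂ :=
    key.trans (add_le_add_left (measureReal_mono s2 (by finiteness)) _)
  rw [← ofReal_measureReal (by finiteness), ← ofReal_measureReal (μ := P.prod P) (by finiteness)]
  exact (ENNReal.ofReal_le_ofReal k2).trans ENNReal.ofReal_add_le

/-- Berbee-type decoupling of a whole sequence of blocks, one block at a time. -/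
lemma beta_blocks {α : Type*} [TopologicalSpace α] [SecondCountableTopology α] [MeasurableSpace α]
    [BorelSpace α] (X : ℕ → Ω → α) (hX : ∀ k, Measurable (X k)) (b : ℝ≥0∞)
    (m₁ m₂ : ℕ → MeasurableSpace Ω) (h₁ : ∀ k, m₁ k ≤ mΩ) (h₂ : ∀ k, m₂ k ≤ mΩ) (M : ℕ)
    (hf : ∀ k < M, ∀ i < k + 1, Measurable[m₁ k] (X i))
    (hg : ∀ k < M, Measurable[m₂ k] (X (k + 1)))
    (hb : ∀ k < M, ENNReal.ofReal (betaDep P (m₁ k) (m₂ k)) ≤ b) :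
    ∀ k ≤ M, ∀ C : Set (Fin (k + 1) → α), IsOpen C →
      P {ω | (fun i : Fin (k + 1) => X i ω) ∈ C} ≤
        (Measure.pi fun i : Fin (k + 1) => P.map (X i)) C + k * b := by
  have hprobX : ∀ k, IsProbabilityMeasure (P.map (X k)) := fun k =>
    Measure.isProbabilityMeasure_map (hX k).aemeasurable
  intro k
  induction k with
  | zero =>
    intro _ C hC
    have hmp := measurePreserving_piUnique (fun i : Fin 1 => P.map (X i))
    have h2 := hmp.symm.measure_preimage_equiv C
    simp only [Nat.cast_zero, zero_mul, add_zero]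
    refine le_trans (le_of_eq ?_) h2.le
    have h3 : P.map (X ((default : Fin 1) : ℕ)) = P.map (X 0) := rfl
    rw [h3, Measure.map_apply (hX 0) ((MeasurableEquiv.measurable _) hC.measurableSet)]
    refine congrArg P ?_
    ext ω
    have : (fun i : Fin (0 + 1) => X i ω) =
        (MeasurableEquiv.piUnique (fun _ : Fin 1 => α)).symm (X 0 ω) := by
      funext i
      obtain rfl : i = 0 := Fin.fin_one_eq_zero i
      rfl
    show _ ∈ C ↔ _ ∈ C
    rw [this]
  | succ k ih =>
    intro hk C hC
    have hmp := measurePreserving_piFinSuccAbove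
      (fun i : Fin (k + 1 + 1) => P.map (X i)) (Fin.last (k + 1))
    set e := MeasurableEquiv.piFinSuccAbove (fun _ : Fin (k + 1 + 1) => α) (Fin.last (k + 1)) with he
    have hcont : Continuous e.symm := by
      show Continuous fun x : α × (Fin (k + 1) → α) =>
        (Fin.last (k + 1)).insertNth (α := fun _ => α) x.1 x.2
      exact Continuous.finInsertNth _ continuous_fst continuous_snd
    have hC' : IsOpen (e.symm ⁻¹' C) := hC.preimage hcont
    have hpi := hmp.symm.measure_preimage_equiv C
    set f : Ω → Fin (k + 1) → α := fun ω i => X i ω with hfdef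
    have hfm : Measurable[m₁ k] f :=
      @measurable_pi_lambda _ _ _ (m₁ k) _ _ fun i => hf k (by omega) i i.2
    have hfm' : Measurable f := hfm.mono (h₁ k) le_rfl
    have hD : IsOpen (Prod.swap ⁻¹' (e.symm ⁻¹' C)) := hC'.preimage continuous_swap
    have key := beta_open (m₁ k) (m₂ k) P (h₁ k) (h₂ k) f (X (k + 1)) hfm (hg k (by omega)) _ hD
    have : IsProbabilityMeasure (P.map f) := Measure.isProbabilityMeasure_map hfm'.aemeasurable
    have e1 : {ω | (fun i : Fin (k + 1 + 1) => X i ω) ∈ C} =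
        {ω | (f ω, X (k + 1) ω) ∈ Prod.swap ⁻¹' (e.symm ⁻¹' C)} := by
      ext ω
      have : (fun i : Fin (k + 1 + 1) => X i ω) = e.symm (X (k + 1) ω, f ω) := by
        have h0 : e (fun i : Fin (k + 1 + 1) => X i ω) = (X (k + 1) ω, f ω) := by
          refine Prod.ext rfl ?_
          funext j
          show X ((Fin.last (k + 1)).succAbove j : Fin (k + 1 + 1)) ω = X j ω
          simp [Fin.succAbove_last]
        rw [← h0, MeasurableEquiv.symm_apply_apply]
      show (fun i : Fin (k + 1 + 1) => X i ω) ∈ C ↔ e.symm (X (k + 1) ω, f ω) ∈ C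
      rw [this]
    have e2 : ((P.map f).prod (P.map (X (k + 1)))) (Prod.swap ⁻¹' (e.symm ⁻¹' C)) =
        ∫⁻ x, P.map f (Prod.mk x ⁻¹' (e.symm ⁻¹' C)) ∂(P.map (X (k + 1))) := by
      rw [← Measure.map_apply measurable_swap hC'.measurableSet, Measure.prod_swap,
        Measure.prod_apply hC'.measurableSet]
    have e3 : (Measure.pi fun i : Fin (k + 1 + 1) => P.map (X i)) C =
        ∫⁻ x, (Measure.pi fun i : Fin (k + 1) => P.map (X i))
          (Prod.mk x ⁻¹' (e.symm ⁻¹' C)) ∂(P.map (X (k + 1))) := by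
      rw [← hpi, Measure.prod_apply hC'.measurableSet]
      simp [Fin.succAbove_last]
    rw [e1]
    refine key.trans ?_
    rw [e2, e3]
    have hstep : ∫⁻ x, P.map f (Prod.mk x ⁻¹' (e.symm ⁻¹' C)) ∂(P.map (X (k + 1))) ≤
        ∫⁻ x, ((Measure.pi fun i : Fin (k + 1) => P.map (X i))
          (Prod.mk x ⁻¹' (e.symm ⁻¹' C)) + k * b) ∂(P.map (X (k + 1))) := by
      refine lintegral_mono fun x => ?_
      have ho : IsOpen (Prod.mk x ⁻¹' (e.symm ⁻¹' C)) := hC'.preimage (by fun_prop)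
      rw [Measure.map_apply hfm' ho.measurableSet]
      exact ih (by omega) _ ho
    rw [lintegral_add_right _ measurable_const, lintegral_const, measure_univ, mul_one] at hstep
    calc _ ≤ _ + b := add_le_add hstep (hb k (by omega))
      _ = _ := by push_cast; rw [add_mul, one_mul, add_assoc]

end Decoupling

/-! ### Bernstein's inequality for the block covariances -/

/-- Exponential (Bernstein-type) tail bound for sums of independent bounded centred variables,
in terms of a free parameter `θ` with `θ B ≤ 1`. -/
lemma bernstein {m : ℕ} {α : Type*} [MeasurableSpace α] (μ : Fin m → Measure α)
    [∀ l, IsProbabilityMeasure (μ l)] (Z : Fin m → α → ℝ) (hZ : ∀ l, Measurable (Z l)) (B V θ s : ℝ)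
    (hB : ∀ l, ∀ᵐ x ∂(μ l), |Z l x| ≤ B) (h0 : ∀ l, ∫ x, Z l x ∂(μ l) = 0)
    (hV : ∑ l, ∫ x, Z l x ^ 2 ∂(μ l) ≤ V) (hθ : 0 ≤ θ) (hθB : θ * B ≤ 1) :
    (Measure.pi μ).real {x | s ≤ ∑ l, Z l (x l)} ≤ Real.exp (-θ * s + θ ^ 2 * V) := by
  have hZi : ∀ l, Integrable (Z l) (μ l) := fun l =>
    Integrable.of_bound (hZ l).aestronglyMeasurable B (hB l)
  have hZ2 : ∀ l, Integrable (fun x => Z l x ^ 2) (μ l) := fun l =>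
    Integrable.of_bound ((hZ l).pow_const 2).aestronglyMeasurable (B ^ 2) (by
      filter_upwards [hB l] with x hx
      rw [Real.norm_eq_abs, abs_pow]
      exact pow_le_pow_left₀ (abs_nonneg _) hx 2)
  have hθZ : ∀ l, ∀ᵐ x ∂(μ l), |θ * Z l x| ≤ 1 := fun l => by
    filter_upwards [hB l] with x hx
    rw [abs_mul, abs_of_nonneg hθ]
    exact (mul_le_mul_of_nonneg_left hx hθ).trans hθB
  have hei : ∀ l, Integrable (fun x => Real.exp (θ * Z l x)) (μ l) := fun l =>
    Integrable.of_bound (by have := hZ l; fun_prop) (Real.exp 1) (by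
      filter_upwards [hθZ l] with x hx
      rw [Real.norm_eq_abs, Real.abs_exp]
      exact Real.exp_le_exp.2 ((le_abs_self _).trans hx))
  have hexp : ∀ x : Fin m → α, Real.exp (θ * ∑ l, Z l (x l)) = ∏ l, Real.exp (θ * Z l (x l)) := by
    intro x
    rw [Finset.mul_sum, Real.exp_sum]
  have hone : ∀ l, ∫ x, Real.exp (θ * Z l x) ∂(μ l) ≤
      Real.exp (θ ^ 2 * ∫ x, Z l x ^ 2 ∂(μ l)) := fun l => by
    calc ∫ x, Real.exp (θ * Z l x) ∂(μ l)
        ≤ ∫ x, (1 + θ * Z l x + θ ^ 2 * Z l x ^ 2) ∂(μ l) := by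
          refine integral_mono_ae (hei l)
            (((integrable_const _).add ((hZi l).const_mul θ)).add ((hZ2 l).const_mul _)) ?_
          filter_upwards [hθZ l] with x hx
          have := (abs_le.1 (Real.abs_exp_sub_one_sub_id_le hx)).2
          nlinarith
      _ = 1 + θ ^ 2 * ∫ x, Z l x ^ 2 ∂(μ l) := by
          have h1 : Integrable (fun x => 1 + θ * Z l x) (μ l) :=
            (integrable_const _).add ((hZi l).const_mul θ)
          rw [integral_add h1 ((hZ2 l).const_mul _), integral_add (integrable_const _) ((hZi l).const_mul θ), integral_const_mul,
            integral_const_mul, h0 l]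
          simp
      _ ≤ _ := by linarith [Real.add_one_le_exp (θ ^ 2 * ∫ x, Z l x ^ 2 ∂(μ l))]
  have hInt : Integrable (fun x : Fin m → α => Real.exp (θ * ∑ l, Z l (x l))) (Measure.pi μ) := by
    simp_rw [hexp]
    exact Integrable.fintype_prod hei
  refine (measure_ge_le_exp_mul_mgf s hθ hInt).trans ?_
  rw [Real.exp_add]
  refine mul_le_mul_of_nonneg_left ?_ (Real.exp_pos _).le
  unfold mgf
  simp_rw [hexp]
  rw [integral_fintype_prod_eq_prod (fun l x => Real.exp (θ * Z l x))]
  calc ∏ l, ∫ x, Real.exp (θ * Z l x) ∂(μ l)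
      ≤ ∏ l, Real.exp (θ ^ 2 * ∫ x, Z l x ^ 2 ∂(μ l)) :=
        Finset.prod_le_prod (fun l _ => integral_nonneg fun x => (Real.exp_pos _).le)
          fun l _ => hone l
    _ = Real.exp (θ ^ 2 * ∑ l, ∫ x, Z l x ^ 2 ∂(μ l)) := by
        rw [← Real.exp_sum, Finset.mul_sum]
    _ ≤ _ := Real.exp_le_exp.2 (mul_le_mul_of_nonneg_left hV (sq_nonneg θ))

/-- Uniform deviation of the empirical second-moment matrix of independent bounded vectors. -/
lemma cov_deviation {m p : ℕ} (μ : Fin m → Measure (Fin p → ℝ)) [∀ l, IsProbabilityMeasure (μ l)]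
    (R G N θ s : ℝ) (hR : 0 ≤ R) (hN : 0 < N)
    (hb : ∀ l, ∀ᵐ x ∂(μ l), ∀ j, |x j| ≤ R) (h2 : ∀ l j, ∫ x, x j ^ 2 ∂(μ l) ≤ G)
    (hθ : 0 ≤ θ) (hθB : θ * (2 * R ^ 2 / N) ≤ 1) :
    (Measure.pi μ).real {x | ∃ j k, s < |N⁻¹ * ∑ l, x l j * x l k -
        N⁻¹ * ∑ l, ∫ y, y j * y k ∂(μ l)|} ≤
      2 * (p : ℝ) ^ 2 * Real.exp (-θ * s + θ ^ 2 * (m * (R ^ 2 * G) / N ^ 2)) := by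
  set E := Real.exp (-θ * s + θ ^ 2 * (m * (R ^ 2 * G) / N ^ 2)) with hE
  -- One entry, one sign.
  have key : ∀ (σ : ℝ), |σ| = 1 → ∀ j k, (Measure.pi μ).real {x | s ≤ ∑ l, σ * (N⁻¹ * (x l j * x l k -
      ∫ y, y j * y k ∂(μ l)))} ≤ E := by
    intro σ hσ j k
    have hm : Measurable fun x : Fin p → ℝ => x j * x k := by fun_prop
    have hjk : ∀ l, ∀ᵐ x ∂(μ l), |x j * x k| ≤ R ^ 2 := fun l => by
      filter_upwards [hb l] with x hx
      rw [abs_mul, sq]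
      exact mul_le_mul (hx j) (hx k) (abs_nonneg _) hR
    have hi : ∀ l, Integrable (fun x : Fin p → ℝ => x j * x k) (μ l) := fun l =>
      Integrable.of_bound hm.aestronglyMeasurable (R ^ 2) (hjk l)
    have hi2 : ∀ l, Integrable (fun x : Fin p → ℝ => (x j * x k) ^ 2) (μ l) := fun l =>
      Integrable.of_bound (hm.pow_const 2).aestronglyMeasurable ((R ^ 2) ^ 2) (by
        filter_upwards [hjk l] with x hx
        rw [Real.norm_eq_abs, abs_pow]
        exact pow_le_pow_left₀ (abs_nonneg _) hx 2)
    have hik : ∀ l, Integrable (fun x : Fin p → ℝ => x k ^ 2) (μ l) := fun l =>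
      Integrable.of_bound ((measurable_pi_apply k).pow_const 2).aestronglyMeasurable (R ^ 2) (by
        filter_upwards [hb l] with x hx
        rw [Real.norm_eq_abs, abs_pow]
        exact pow_le_pow_left₀ (abs_nonneg _) (hx k) 2)
    have hE1 : ∀ l, |∫ y, y j * y k ∂(μ l)| ≤ R ^ 2 := fun l => by
      have := norm_integral_le_of_norm_le_const (μ := μ l)
        (f := fun y : Fin p → ℝ => y j * y k) (hjk l)
      simpa using this
    refine bernstein μ (fun l x => σ * (N⁻¹ * (x j * x k - ∫ y, y j * y k ∂(μ l))))
      (fun l => by fun_prop) (2 * R ^ 2 / N) _ θ s ?_ ?_ ?_ hθ hθB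
    · intro l
      filter_upwards [hjk l] with x hx
      rw [abs_mul, hσ, one_mul, abs_mul, abs_inv, abs_of_pos hN, div_eq_inv_mul]
      refine mul_le_mul_of_nonneg_left ?_ (inv_nonneg.2 hN.le)
      linarith [abs_sub (x j * x k) (∫ y, y j * y k ∂(μ l)), hE1 l]
    · intro l
      rw [integral_const_mul, integral_const_mul, integral_sub (hi l) (integrable_const _)]
      simp
    · have hl : ∀ l, ∫ x, (σ * (N⁻¹ * (x j * x k - ∫ y, y j * y k ∂(μ l)))) ^ 2 ∂(μ l) ≤
          R ^ 2 * G / N ^ 2 := by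
        intro l
        have hσ2 : σ ^ 2 = 1 := by rw [← sq_abs, hσ, one_pow]
        set a := ∫ y, y j * y k ∂(μ l) with ha
        calc ∫ x, (σ * (N⁻¹ * (x j * x k - a))) ^ 2 ∂(μ l)
            = ∫ x, (N⁻¹) ^ 2 * ((x j * x k) ^ 2 - 2 * a * (x j * x k) + a ^ 2) ∂(μ l) := by
              refine integral_congr_ae (Eventually.of_forall fun x => ?_)
              show (σ * (N⁻¹ * (x j * x k - a))) ^ 2 = _
              rw [mul_pow, hσ2]; ring
          _ = (N⁻¹) ^ 2 * ((∫ x, (x j * x k) ^ 2 ∂(μ l)) - a ^ 2) := by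
              have h1 : Integrable (fun x : Fin p → ℝ => (x j * x k) ^ 2 - 2 * a * (x j * x k))
                  (μ l) := (hi2 l).sub ((hi l).const_mul _)
              rw [integral_const_mul, integral_add h1 (integrable_const _), integral_sub (hi2 l) ((hi l).const_mul _),
                integral_const_mul, ← ha]
              simp; left; ring
          _ ≤ (N⁻¹) ^ 2 * (R ^ 2 * G) := by
              refine mul_le_mul_of_nonneg_left ?_ (sq_nonneg _)
              have : ∫ x, (x j * x k) ^ 2 ∂(μ l) ≤ ∫ x, R ^ 2 * x k ^ 2 ∂(μ l) := by
                refine integral_mono_ae (hi2 l) ((hik l).const_mul _) ?_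
                filter_upwards [hb l] with x hx
                rw [mul_pow, ← sq_abs (x j)]
                exact mul_le_mul_of_nonneg_right (pow_le_pow_left₀ (abs_nonneg _) (hx j) 2)
                  (sq_nonneg _)
              rw [integral_const_mul] at this
              have := mul_le_mul_of_nonneg_left (h2 l k) (sq_nonneg R)
              nlinarith [sq_nonneg a]
          _ = _ := by rw [inv_pow, div_eq_inv_mul]
      calc _ ≤ ∑ _l : Fin m, R ^ 2 * G / N ^ 2 := Finset.sum_le_sum fun l _ => hl l
        _ = _ := by simp; ring
  set U : Fin p × Fin p → Set (Fin m → Fin p → ℝ) := fun jk =>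
    {x | s ≤ ∑ l, (1 : ℝ) * (N⁻¹ * (x l jk.1 * x l jk.2 - ∫ y, y jk.1 * y jk.2 ∂(μ l)))} ∪
    {x | s ≤ ∑ l, (-1 : ℝ) * (N⁻¹ * (x l jk.1 * x l jk.2 - ∫ y, y jk.1 * y jk.2 ∂(μ l)))} with hU
  have hsub : {x | ∃ j k, s < |N⁻¹ * ∑ l, x l j * x l k - N⁻¹ * ∑ l, ∫ y, y j * y k ∂(μ l)|} ⊆
      ⋃ jk, U jk := by
    rintro x ⟨j, k, h⟩
    refine Set.mem_iUnion.2 ⟨(j, k), ?_⟩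
    have e : N⁻¹ * ∑ l, x l j * x l k - N⁻¹ * ∑ l, ∫ y, y j * y k ∂(μ l) =
        ∑ l, (N⁻¹ * (x l j * x l k - ∫ y, y j * y k ∂(μ l))) := by
      rw [← Finset.mul_sum, Finset.sum_sub_distrib, mul_sub]
    rw [e] at h
    rcases lt_abs.1 h with h | h
    · left
      show s ≤ _
      simpa only [one_mul] using h.le
    · right
      show s ≤ _
      simpa only [neg_one_mul, Finset.sum_neg_distrib] using h.le
  refine (measureReal_mono hsub (by finiteness)).trans ?_
  refine (measureReal_iUnion_fintype_le _).trans ?_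
  calc ∑ jk, (Measure.pi μ).real (U jk) ≤ ∑ _jk : Fin p × Fin p, 2 * E := by
        refine Finset.sum_le_sum fun jk _ => (measureReal_union_le _ _).trans ?_
        linarith [key 1 (by simp) jk.1 jk.2, key (-1) (by simp) jk.1 jk.2]
    _ = _ := by simp; ring

/-! ### Large blocks -/

/-- The vector of sums over the `l`-th large block (indexed from `0`). -/
def blockVec (n p q r l : ℕ) (ω : Fin n → Fin p → ℝ) : Fin p → ℝ :=
  fun j => blockSum n p (l * (q + r)) q j ω

section Blocks

variable {n p q r : ℕ}

lemma nBlocks_mul_le : nBlocks n q r * (q + r) ≤ n := Nat.div_mul_le_self _ _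

lemma two_le_nBlocks (hr : 1 ≤ r) (hn : 2 * (q + r) ≤ n) : 2 ≤ nBlocks n q r :=
  (Nat.le_div_iff_mul_le (by omega)).2 hn

/-- The large blocks cover at least a quarter of the sample. -/
lemma quarter_le (hr : 1 ≤ r) (hrq : r < q) (hn : 2 * (q + r) ≤ n) :
    (n : ℝ) / 4 ≤ ((nBlocks n q r * q : ℕ) : ℝ) := by
  have h1 : n < (nBlocks n q r + 1) * (q + r) := by
    rw [nBlocks, mul_comm]
    exact Nat.lt_mul_div_succ n (by omega)
  have h2 : n ≤ 4 * (nBlocks n q r * q) := by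
    have h3 : 2 * (q + r) ≤ nBlocks n q r * (q + r) :=
      Nat.mul_le_mul_right _ (two_le_nBlocks hr hn)
    have hm := two_le_nBlocks hr hn
    nlinarith
  have : (n : ℝ) ≤ 4 * ((nBlocks n q r * q : ℕ) : ℝ) := by exact_mod_cast h2
  linarith

lemma measurable_blockSum (a : ℕ) (j : Fin p) : Measurable (blockSum n p a q j) := by
  unfold blockSum
  refine Finset.measurable_sum _ fun i _ => ?_
  split_ifs <;> fun_prop

lemma measurable_blockVec (l : ℕ) : Measurable (blockVec n p q r l) :=
  measurable_pi_lambda _ fun _ => measurable_blockSum _ _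

lemma measurable_blockSum_of (m₀ : MeasurableSpace (Fin n → Fin p → ℝ)) (a : ℕ) (j : Fin p)
    (h : ∀ i : Fin n, a ≤ (i : ℕ) → (i : ℕ) < a + q →
      MeasurableSpace.comap (fun ω : Fin n → Fin p → ℝ => ω i) inferInstance ≤ m₀) :
    Measurable[m₀] (blockSum n p a q j) := by
  unfold blockSum
  refine Finset.measurable_sum _ fun i _ => ?_
  split_ifs with hi
  · exact (measurable_pi_apply j).comp
      (Measurable.mono (comap_measurable fun ω : Fin n → Fin p → ℝ => ω i) (h i hi.1 hi.2) le_rfl)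
  · exact measurable_const

lemma sigmaUpTo_le (l : ℕ) : sigmaUpTo n p l ≤ MeasurableSpace.pi :=
  iSup_le fun i => iSup_le fun _ => (measurable_pi_apply i).comap_le

lemma sigmaFrom_le (l : ℕ) : sigmaFrom n p l ≤ MeasurableSpace.pi :=
  iSup_le fun i => iSup_le fun _ => (measurable_pi_apply i).comap_le

lemma measurable_upTo (l a : ℕ) (h : a + q ≤ l) (j : Fin p) :
    Measurable[sigmaUpTo n p l] (blockSum n p a q j) :=
  measurable_blockSum_of _ _ _ fun i _ hi => le_iSup_of_le i (le_iSup_of_le (by omega) le_rfl)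

lemma measurable_from (l a : ℕ) (h : l ≤ a) (j : Fin p) :
    Measurable[sigmaFrom n p l] (blockSum n p a q j) :=
  measurable_blockSum_of _ _ _ fun i hi _ => le_iSup_of_le i (le_iSup_of_le (by omega) le_rfl)

lemma betaDep_nonneg {Ω : Type*} (m₁ m₂ : MeasurableSpace Ω) [MeasurableSpace Ω] (P : Measure Ω) :
    0 ≤ betaDep P m₁ m₂ := by
  refine mul_nonneg (by norm_num) (Real.sSup_nonneg ?_)
  rintro x ⟨I, J, A, B, -, -, -, -, -, -, rfl⟩
  positivity

lemma variance_bounds {Pm : Measure (Fin n → Fin p → ℝ)} {c₁ C₁ : ℝ} (hlow : c₁ ≤ sigmaLowSq n p Pm q)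
    (hup : sigmaBarSq n p Pm q ≤ C₁) (a : ℕ) (ha : a + q ≤ n) (j : Fin p) :
    c₁ ≤ variance (fun ω => blockSum n p a q j ω / Real.sqrt q) Pm ∧
      variance (fun ω => blockSum n p a q j ω / Real.sqrt q) Pm ≤ C₁ := by
  let v : Fin p → Fin (n - q + 1) → ℝ := fun j a =>
    variance (fun ω => blockSum n p (a : ℕ) q j ω / Real.sqrt q) Pm
  let a' : Fin (n - q + 1) := ⟨a, by omega⟩
  constructor
  · refine hlow.trans ?_
    exact (ciInf_le (f := fun j => ⨅ a, v j a) (Set.finite_range _).bddBelow j).trans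
      (ciInf_le (f := v j) (Set.finite_range _).bddBelow a')
  · refine le_trans ?_ hup
    exact (le_ciSup (f := v j) (Set.finite_range _).bddAbove a').trans
      (le_ciSup (f := fun j => ⨆ a, v j a) (Set.finite_range _).bddAbove j)

variable (Pm : Measure (Fin n → Fin p → ℝ))

lemma bmix_nonneg (k : ℕ) : 0 ≤ bmix n p Pm k := Real.iSup_nonneg fun _ => betaDep_nonneg _ _ _

variable [IsProbabilityMeasure Pm]

/-- Replacing the large blocks by independent copies costs at most `(m - 1) b_r`
(on open sets). -/
lemma decouple (hr : 1 ≤ r) (hq : 0 < q) (hn : 2 * (q + r) ≤ n)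
    (C : Set (Fin (nBlocks n q r) → Fin p → ℝ)) (hC : IsOpen C) :
    Pm.real {ω | (fun l : Fin (nBlocks n q r) => blockVec n p q r l ω) ∈ C} ≤
      (Measure.pi fun l : Fin (nBlocks n q r) => Pm.map (blockVec n p q r l)).real C +
        ((nBlocks n q r : ℝ) - 1) * bmix n p Pm r := by
  have hm2 := two_le_nBlocks hr hn
  have hmul : nBlocks n q r * (q + r) ≤ n := nBlocks_mul_le
  have hprob : ∀ k, IsProbabilityMeasure (Pm.map (blockVec n p q r k)) := fun k =>
    Measure.isProbabilityMeasure_map (measurable_blockVec k).aemeasurable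
  have key := beta_blocks Pm (blockVec n p q r) measurable_blockVec
    (ENNReal.ofReal (bmix n p Pm r)) (fun k => sigmaUpTo n p (k * (q + r) + q - 1 + 1))
    (fun k => sigmaFrom n p (k * (q + r) + q - 1 + r)) (fun k => sigmaUpTo_le _)
    (fun k => sigmaFrom_le _) (nBlocks n q r - 1) ?_ ?_ ?_
  · generalize nBlocks n q r = m at C hC key hm2
    obtain ⟨k, rfl⟩ : ∃ k, m = k + 1 := ⟨m - 1, by omega⟩
    have h := key k (by omega) C hC
    have h' := ENNReal.toReal_mono (by finiteness) h
    rw [ENNReal.toReal_add (by finiteness) (by finiteness), ENNReal.toReal_mul,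
      ENNReal.toReal_ofReal (bmix_nonneg Pm r), ENNReal.toReal_natCast] at h'
    refine h'.trans (le_of_eq ?_)
    push_cast
    rw [add_sub_cancel_right]
    rfl
  · intro k _ i hi
    refine @measurable_pi_lambda _ _ _ (_) _ _ fun j => measurable_upTo _ _ ?_ _
    have : i * (q + r) ≤ k * (q + r) := Nat.mul_le_mul_right _ (by omega)
    omega
  · intro k _
    refine @measurable_pi_lambda _ _ _ (_) _ _ fun j => measurable_from _ _ ?_ _
    rw [add_mul]
    omega
  · intro k hk
    refine ENNReal.ofReal_le_ofReal ?_
    have h1 : (k + 2) * (q + r) ≤ nBlocks n q r * (q + r) := Nat.mul_le_mul_right _ (by omega)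
    have h2 : k * (q + r) + q - 1 < n - r := by
      rw [add_mul] at h1
      omega
    exact le_ciSup (f := fun l : Fin (n - r) =>
      betaDep Pm (sigmaUpTo n p ((l : ℕ) + 1)) (sigmaFrom n p ((l : ℕ) + r)))
      (Set.finite_range _).bddAbove ⟨_, h2⟩

variable {Pm}

lemma abs_blockSum_le {D : ℝ} (hD : 0 ≤ D) (ω : Fin n → Fin p → ℝ) (hω : ∀ i j, |ω i j| ≤ D) (a : ℕ)
    (j : Fin p) : |blockSum n p a q j ω| ≤ q * D := by
  unfold blockSum
  rw [← Finset.sum_filter]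
  refine (Finset.abs_sum_le_sum_abs _ _).trans ?_
  refine (Finset.sum_le_card_nsmul _ _ D fun i _ => hω i j).trans ?_
  rw [nsmul_eq_mul]
  refine mul_le_mul_of_nonneg_right ?_ hD
  have : (Finset.univ.filter fun i : Fin n => a ≤ (i : ℕ) ∧ (i : ℕ) < a + q).card ≤
      (Finset.Ico a (a + q)).card :=
    Finset.card_le_card_of_injOn (fun i => (i : ℕ)) (fun i hi => by simpa using hi)
      (fun i _ j _ h => Fin.ext h)
  rw [Nat.card_Ico, Nat.add_sub_cancel_left] at this
  exact_mod_cast this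

lemma integrable_blockSum_mul {D : ℝ} (hD : 0 ≤ D) (hb : ∀ᵐ ω ∂Pm, ∀ i j, |ω i j| ≤ D) (a : ℕ)
    (j k : Fin p) : Integrable (fun ω => blockSum n p a q j ω * blockSum n p a q k ω) Pm := by
  refine Integrable.of_bound
    ((measurable_blockSum a j).mul (measurable_blockSum a k)).aestronglyMeasurable
    ((q * D) * (q * D)) ?_
  filter_upwards [hb] with ω hω
  rw [Real.norm_eq_abs, abs_mul]
  exact mul_le_mul (abs_blockSum_le hD ω hω a j) (abs_blockSum_le hD ω hω a k) (abs_nonneg _)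
    (by positivity)

lemma variance_blockSum {D : ℝ} (hb : ∀ᵐ ω ∂Pm, ∀ i j, |ω i j| ≤ D)
    (h0 : ∀ i j, ∫ ω, ω i j ∂Pm = 0) (hq : 0 < q) (a : ℕ) (j : Fin p) :
    ∫ ω, blockSum n p a q j ω * blockSum n p a q j ω ∂Pm =
      q * variance (fun ω => blockSum n p a q j ω / Real.sqrt q) Pm := by
  have hmean : ∫ ω, blockSum n p a q j ω ∂Pm = 0 := by
    unfold blockSum
    rw [integral_finsetSum]
    · refine Finset.sum_eq_zero fun i _ => ?_
      split_ifs
      · exact h0 i j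
      · simp
    · intro i _
      split_ifs
      · refine Integrable.of_bound (Measurable.aestronglyMeasurable (by fun_prop)) D ?_
        filter_upwards [hb] with ω hω
        exact hω i j
      · exact integrable_const _
  have hq' : (0 : ℝ) < q := by exact_mod_cast hq
  rw [variance_eq_integral ((measurable_blockSum a j).div_const _).aemeasurable, integral_div, hmean]
  simp only [zero_div, sub_zero, div_pow]
  rw [integral_div, Real.sq_sqrt hq'.le, mul_div_cancel₀ _ hq'.ne']
  simp_rw [sq]

lemma block_end_le (l : Fin (nBlocks n q r)) : (l : ℕ) * (q + r) + q ≤ n := by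
  have h : ((l : ℕ) + 1) * (q + r) ≤ nBlocks n q r * (q + r) := Nat.mul_le_mul_right _ l.2
  have := nBlocks_mul_le (n := n) (q := q) (r := r)
  rw [add_mul] at h
  omega

lemma second_moment_bounds {D : ℝ} (hb : ∀ᵐ ω ∂Pm, ∀ i j, |ω i j| ≤ D)
    (h0 : ∀ i j, ∫ ω, ω i j ∂Pm = 0) (hq : 0 < q) {c₁ C₁ : ℝ} (hlow : c₁ ≤ sigmaLowSq n p Pm q)
    (hup : sigmaBarSq n p Pm q ≤ C₁) (l : Fin (nBlocks n q r)) (j : Fin p) :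
    q * c₁ ≤ ∫ ω, blockSum n p (l * (q + r)) q j ω * blockSum n p (l * (q + r)) q j ω ∂Pm ∧
      ∫ ω, blockSum n p (l * (q + r)) q j ω * blockSum n p (l * (q + r)) q j ω ∂Pm ≤ q * C₁ := by
  rw [variance_blockSum hb h0 hq]
  have h := variance_bounds hlow hup (l * (q + r)) (block_end_le l) j
  exact ⟨mul_le_mul_of_nonneg_left h.1 (by positivity),
    mul_le_mul_of_nonneg_left h.2 (by positivity)⟩

lemma blockCov_diag {D : ℝ} (hb : ∀ᵐ ω ∂Pm, ∀ i j, |ω i j| ≤ D)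
    (h0 : ∀ i j, ∫ ω, ω i j ∂Pm = 0) (hq : 0 < q) (hm : 0 < nBlocks n q r) {c₁ C₁ : ℝ}
    (hlow : c₁ ≤ sigmaLowSq n p Pm q) (hup : sigmaBarSq n p Pm q ≤ C₁) (j : Fin p) :
    c₁ ≤ blockCov n p q r Pm j j ∧ blockCov n p q r Pm j j ≤ C₁ := by
  have h := second_moment_bounds (r := r) hb h0 hq hlow hup
  have hN : (0 : ℝ) < ((nBlocks n q r * q : ℕ) : ℝ) := by exact_mod_cast Nat.mul_pos hm hq
  have e : ∀ x : ℝ, x = ((nBlocks n q r * q : ℕ) : ℝ)⁻¹ * ∑ _l : Fin (nBlocks n q r), (q * x) := by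
    intro x
    rw [Finset.sum_const, Finset.card_univ, Fintype.card_fin, nsmul_eq_mul, ← mul_assoc (_ : ℝ) (q : ℝ) x,
      ← Nat.cast_mul, inv_mul_cancel_left₀ hN.ne']
  unfold blockCov
  constructor
  · conv_lhs => rw [e c₁]
    gcongr with l
    exact (h l j).1
  · conv_rhs => rw [e C₁]
    gcongr with l
    exact (h l j).2

lemma blockCov_posSemidef {D : ℝ} (hD : 0 ≤ D) (hb : ∀ᵐ ω ∂Pm, ∀ i j, |ω i j| ≤ D) :
    (Matrix.of (blockCov n p q r Pm)).PosSemidef := by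
  refine Matrix.PosSemidef.of_dotProduct_mulVec_nonneg ?_ fun x => ?_
  · ext j k
    simp only [Matrix.conjTranspose_apply, Matrix.of_apply, star_trivial, blockCov]
    simp_rw [mul_comm (blockSum n p _ q k _)]
  · have e : star x ⬝ᵥ (Matrix.of (blockCov n p q r Pm)).mulVec x =
        ((nBlocks n q r * q : ℕ) : ℝ)⁻¹ * ∑ l : Fin (nBlocks n q r),
          ∫ ω, (∑ j, x j * blockSum n p ((l : ℕ) * (q + r)) q j ω) ^ 2 ∂Pm := by
      have e1 : ∀ l : Fin (nBlocks n q r),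
          ∫ ω, (∑ j, x j * blockSum n p ((l : ℕ) * (q + r)) q j ω) ^ 2 ∂Pm =
          ∑ j, ∑ k, x j * x k * ∫ ω, blockSum n p ((l : ℕ) * (q + r)) q j ω *
            blockSum n p ((l : ℕ) * (q + r)) q k ω ∂Pm := by
        intro l
        have hi := fun j k => integrable_blockSum_mul (q := q) hD hb ((l : ℕ) * (q + r)) j k
        simp_rw [← integral_const_mul]
        have hi' := fun j k => (hi j k).const_mul (x j * x k)
        simp_rw [← integral_finsetSum _ fun k _ => hi' _ k]
        rw [← integral_finsetSum _ fun j _ => integrable_finsetSum _ fun k _ => hi' j k]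
        refine integral_congr_ae (Eventually.of_forall fun ω => ?_)
        simp only [sq, Finset.sum_mul_sum]
        refine Finset.sum_congr rfl fun j _ => Finset.sum_congr rfl fun k _ => by ring
      simp_rw [e1]
      simp only [dotProduct, Matrix.mulVec, Matrix.of_apply, star_trivial, blockCov,
        Finset.mul_sum, Finset.sum_mul]
      symm
      rw [Finset.sum_comm]
      refine Finset.sum_congr rfl fun j _ => ?_
      rw [Finset.sum_comm]
      refine Finset.sum_congr rfl fun k _ => Finset.sum_congr rfl fun l _ => by ring
    rw [e]
    have : ∀ l : Fin (nBlocks n q r), 0 ≤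
        ∫ ω, (∑ j, x j * blockSum n p ((l : ℕ) * (q + r)) q j ω) ^ 2 ∂Pm :=
      fun l => integral_nonneg fun ω => sq_nonneg _
    exact mul_nonneg (by positivity) (Finset.sum_nonneg fun l _ => this l)

end Blocks

/-! ### Choice of the rates -/

/-- Calibration of the exponential bound. Here `w` stands for `n ^ (c₂ / 4)`, and `κ₂` for
`(q D)² / n`; the parameter of the exponential bound is a multiple of `w² log³ p`. -/
lemma exists_rate (C₁ : ℝ) (hC : 0 < C₁) : ∃ A : ℝ, 0 < A ∧ ∀ (p : ℕ), 2 ≤ p → ∀ (w κ₂ : ℝ), 1 ≤ w →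
    κ₂ * (w ^ 8 * Real.log p ^ 5) ≤ C₁ ^ 2 →
    ∃ θ : ℝ, 0 ≤ θ ∧ θ * (8 * κ₂) ≤ 1 ∧
      2 * (p : ℝ) ^ 2 * Real.exp (-θ * (A * w⁻¹ / Real.log p ^ 2) + θ ^ 2 * (4 * C₁ * κ₂)) ≤ w⁻¹ := by
  have hl2 : 0 < Real.log 2 := Real.log_pos (by norm_num)
  set κ : ℝ := Real.log 2 ^ 2 / (8 * C₁ ^ 2) with hκ
  have hκ0 : 0 < κ := by positivity
  set v : ℝ := 4 * C₁ ^ 3 * κ ^ 2 with hv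
  have hv0 : 0 < v := by positivity
  refine ⟨(v + 5) / κ, by positivity, fun p hp w κ₂ hw hκ₂ => ?_⟩
  set L := Real.log p with hL
  have hp2 : (2 : ℝ) ≤ p := by exact_mod_cast hp
  have hL2 : Real.log 2 ≤ L := Real.log_le_log (by norm_num) hp2
  have hL0 : 0 < L := hl2.trans_le hL2
  have hw0 : 0 < w := by linarith
  have hκ₂' : κ₂ ≤ C₁ ^ 2 / (w ^ 8 * L ^ 5) := (le_div_iff₀ (by positivity)).2 hκ₂
  refine ⟨κ * w ^ 2 * L ^ 3, by positivity, ?_, ?_⟩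
  · calc κ * w ^ 2 * L ^ 3 * (8 * κ₂)
        ≤ κ * w ^ 2 * L ^ 3 * (8 * (C₁ ^ 2 / (w ^ 8 * L ^ 5))) := by gcongr
      _ = (Real.log 2 / L) ^ 2 * (1 / w) ^ 6 := by
          rw [hκ]; field_simp
      _ ≤ 1 * 1 := by
          refine mul_le_mul (pow_le_one₀ (by positivity) ((div_le_one hL0).2 hL2))
            (pow_le_one₀ (by positivity) ((div_le_one hw0).2 hw)) (by positivity) (by norm_num)
      _ = 1 := one_mul 1
  · have e1 : κ * w ^ 2 * L ^ 3 * ((v + 5) / κ * w⁻¹ / L ^ 2) = (v + 5) * w * L := by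
      field_simp
    have e2 : (κ * w ^ 2 * L ^ 3) ^ 2 * (4 * C₁ * κ₂) ≤ v * L := by
      calc (κ * w ^ 2 * L ^ 3) ^ 2 * (4 * C₁ * κ₂)
          ≤ (κ * w ^ 2 * L ^ 3) ^ 2 * (4 * C₁ * (C₁ ^ 2 / (w ^ 8 * L ^ 5))) := by gcongr
        _ = v * L * (1 / w) ^ 4 := by rw [hv]; field_simp
        _ ≤ v * L * 1 := by
            gcongr
            exact pow_le_one₀ (by positivity) ((div_le_one hw0).2 hw)
        _ = v * L := mul_one _
    have e3 : 2 * (p : ℝ) ^ 2 ≤ Real.exp (3 * L) := by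
      have : Real.exp L = p := Real.exp_log (by linarith)
      rw [show 3 * L = L + L + L by ring, Real.exp_add, Real.exp_add, this]
      nlinarith [sq_nonneg (p : ℝ)]
    calc 2 * (p : ℝ) ^ 2 * Real.exp (-(κ * w ^ 2 * L ^ 3) * ((v + 5) / κ * w⁻¹ / L ^ 2) +
          (κ * w ^ 2 * L ^ 3) ^ 2 * (4 * C₁ * κ₂))
        ≤ Real.exp (3 * L) * Real.exp (-((v + 5) * w * L) + v * L) := by
          rw [neg_mul, e1]
          gcongr
      _ ≤ Real.exp (-w) := by
          rw [← Real.exp_add]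
          refine Real.exp_le_exp.2 ?_
          have h1 : 1 ≤ 2 * L := by linarith [Real.log_two_gt_d9]
          have h2 : (v + 3) * L ≤ (v + 3) * L * w := le_mul_of_one_le_right (by positivity) hw
          nlinarith
      _ ≤ w⁻¹ := by
          rw [Real.exp_neg]
          exact inv_anti₀ hw0 (by linarith [Real.add_one_le_exp w])

/-- With high probability the empirical second moments of the blocks are uniformly close to
`blockCov`. -/
lemma good_event (C₁ c₂ : ℝ) (hC : 0 < C₁) (hc₂ : 0 < c₂) : ∃ A : ℝ, 0 < A ∧
    ∀ (n p q r : ℕ), 2 ≤ p → 1 ≤ r → r < q → 2 * (q + r) ≤ n → ∀ D : ℝ, 1 ≤ D →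
      ∀ Pm : Measure (Fin n → Fin p → ℝ), IsProbabilityMeasure Pm →
      (∀ i j, ∫ ω, ω i j ∂Pm = 0) → (∀ᵐ ω ∂Pm, ∀ i j, |ω i j| ≤ D) →
      sigmaBarSq n p Pm q ≤ C₁ →
      (q : ℝ) * D * Real.log p ^ ((5 : ℝ) / 2) ≤ C₁ * (n : ℝ) ^ ((1 : ℝ) / 2 - c₂) →
      1 - 1 * (n : ℝ) ^ (-(c₂ / 4)) - ((nBlocks n q r : ℝ) - 1) * bmix n p Pm r ≤
        Pm.real {ω | ∀ j k, |((nBlocks n q r * q : ℕ) : ℝ)⁻¹ *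
            ∑ l : Fin (nBlocks n q r), blockVec n p q r l ω j * blockVec n p q r l ω k -
            blockCov n p q r Pm j k| ≤ A * (n : ℝ) ^ (-(c₂ / 4)) / Real.log p ^ 2} := by
  obtain ⟨A, hA, hrate⟩ := exists_rate C₁ hC
  refine ⟨A, hA, ?_⟩
  intro n p q r hp hr hrq hn D hD Pm hPm h0 hb hup hK
  have hq0 : 0 < q := by omega
  have hq : (0 : ℝ) < q := by exact_mod_cast hq0
  have hn0 : (0 : ℝ) < n := by exact_mod_cast (show 0 < n by omega)
  have hn1 : (1 : ℝ) ≤ n := by exact_mod_cast (show 1 ≤ n by omega)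
  have hD0 : 0 ≤ D := by linarith
  have hL0 : 0 < Real.log p := Real.log_pos (by exact_mod_cast (show 1 < p by omega))
  set m := nBlocks n q r with hm
  have hm0 : 0 < m := by have := two_le_nBlocks (n := n) (q := q) hr hn; omega
  have hmR : (0 : ℝ) < m := by exact_mod_cast hm0
  set N : ℝ := ((m * q : ℕ) : ℝ) with hN
  have hN4 : (n : ℝ) / 4 ≤ N := quarter_le hr hrq hn
  have hN0 : 0 < N := by linarith
  set w : ℝ := (n : ℝ) ^ (c₂ / 4) with hw
  have hw0 : 0 < w := Real.rpow_pos_of_pos hn0 _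
  have hw1 : 1 ≤ w := Real.one_le_rpow hn1 (by linarith)
  have hwinv : (n : ℝ) ^ (-(c₂ / 4)) = w⁻¹ := Real.rpow_neg hn0.le _
  rw [hwinv]
  set κ₂ : ℝ := (q * D) ^ 2 / n with hκ₂
  have hκ : κ₂ * (w ^ 8 * Real.log p ^ 5) ≤ C₁ ^ 2 := by
    have h1 := pow_le_pow_left₀ (by positivity) hK 2
    have e1 : (Real.log p ^ ((5 : ℝ) / 2)) ^ 2 = Real.log p ^ 5 := by
      rw [← Real.rpow_natCast, ← Real.rpow_mul hL0.le, ← Real.rpow_natCast]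
      norm_num
    have e2 : ((n : ℝ) ^ ((1 : ℝ) / 2 - c₂)) ^ 2 * w ^ 8 = n := by
      rw [hw, ← Real.rpow_natCast, ← Real.rpow_natCast, ← Real.rpow_mul hn0.le,
        ← Real.rpow_mul hn0.le, ← Real.rpow_add hn0]
      conv_rhs => rw [← Real.rpow_one (n : ℝ)]
      congr 1
      push_cast
      ring
    rw [mul_pow, mul_pow C₁, e1] at h1
    have h2 := mul_le_mul_of_nonneg_right h1 (pow_nonneg hw0.le 8)
    rw [mul_assoc (C₁ ^ 2), e2] at h2
    rw [hκ₂, div_mul_eq_mul_div, div_le_iff₀ hn0]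
    calc _ = ((q : ℝ) * D) ^ 2 * Real.log p ^ 5 * w ^ 8 := by ring
      _ ≤ _ := h2
  obtain ⟨θ, hθ, hθ1, hθ2⟩ := hrate p hp w κ₂ hw1 hκ
  set s : ℝ := A * w⁻¹ / Real.log p ^ 2 with hs
  have hprob : ∀ k, IsProbabilityMeasure (Pm.map (blockVec n p q r k)) := fun k =>
    Measure.isProbabilityMeasure_map (measurable_blockVec k).aemeasurable
  let μ : Fin m → Measure (Fin p → ℝ) := fun l => Pm.map (blockVec n p q r l)
  have hμ : ∀ l, IsProbabilityMeasure (μ l) := fun l => hprob l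
  have hInt : ∀ (l : Fin m) (j k : Fin p), ∫ y, y j * y k ∂(μ l) =
      ∫ ω, blockSum n p (l * (q + r)) q j ω * blockSum n p (l * (q + r)) q k ω ∂Pm := by
    intro l j k
    exact integral_map (measurable_blockVec (l : ℕ)).aemeasurable
      (Measurable.aestronglyMeasurable (by fun_prop))
  have hcov : ∀ j k, N⁻¹ * ∑ l, ∫ y, y j * y k ∂(μ l) = blockCov n p q r Pm j k := by
    intro j k
    simp_rw [hInt]
    rfl
  set C : Set (Fin m → Fin p → ℝ) := {x | ∃ j k, s < |N⁻¹ * ∑ l, x l j * x l k -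
    N⁻¹ * ∑ l, ∫ y, y j * y k ∂(μ l)|} with hCdef
  have hCo : IsOpen C := by
    have : C = ⋃ j, ⋃ k, {x | s < |N⁻¹ * ∑ l, x l j * x l k -
        N⁻¹ * ∑ l, ∫ y, y j * y k ∂(μ l)|} := by
      ext x; simp [hCdef]
    rw [this]
    exact isOpen_iUnion fun j => isOpen_iUnion fun k => isOpen_lt continuous_const (by fun_prop)
  have hdev : (Measure.pi μ).real C ≤ w⁻¹ := by
    have hmle : ∀ x : ℝ, 0 ≤ x → x / N ≤ 4 * (x / n) := by
      intro x hx
      rw [div_le_iff₀ hN0]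
      calc x = 4 * (x / n) * (n / 4) := by field_simp
        _ ≤ _ := by gcongr
    refine (cov_deviation μ (q * D) (q * C₁) N θ s (by positivity) hN0 ?_ ?_ hθ ?_).trans
      (le_trans ?_ hθ2)
    · intro l
      refine (ae_map_iff (measurable_blockVec (l : ℕ)).aemeasurable ?_).2 ?_
      · have : {x : Fin p → ℝ | ∀ j, |x j| ≤ q * D} = ⋂ j, {x | |x j| ≤ q * D} := by
          ext x; simp
        rw [this]
        exact MeasurableSet.iInter fun j => measurableSet_le (by fun_prop) measurable_const
      · filter_upwards [hb] with ω hω j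
        exact abs_blockSum_le hD0 ω hω _ j
    · intro l j
      have := (second_moment_bounds (r := r) hb h0 hq0 le_rfl hup l j).2
      rw [← hInt] at this
      simpa only [sq] using this
    · refine le_trans (mul_le_mul_of_nonneg_left ?_ hθ) hθ1
      refine (hmle _ (by positivity)).trans (le_of_eq ?_)
      rw [hκ₂]; ring
    · have : (m : ℝ) * ((q * D) ^ 2 * (q * C₁)) / N ^ 2 ≤ 4 * C₁ * κ₂ := by
        calc (m : ℝ) * ((q * D) ^ 2 * (q * C₁)) / N ^ 2 = ((q * D) ^ 2 * C₁) / N := by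
              rw [hN]; push_cast; field_simp
          _ ≤ 4 * (((q * D) ^ 2 * C₁) / n) := hmle _ (by positivity)
          _ = _ := by rw [hκ₂]; ring
      gcongr
  have hdec := decouple Pm hr hq0 hn C hCo
  set F : (Fin n → Fin p → ℝ) → Fin m → Fin p → ℝ := fun ω l => blockVec n p q r l ω with hF
  have hFm : Measurable F := measurable_pi_lambda _ fun l => measurable_blockVec _
  have hset : {ω | ∀ j k, |N⁻¹ * ∑ l : Fin m, blockVec n p q r l ω j * blockVec n p q r l ω k -
      blockCov n p q r Pm j k| ≤ s} = (F ⁻¹' C)ᶜ := by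
    ext ω
    simp [hCdef, hF, hcov]
  rw [hset, probReal_compl_eq_one_sub (hFm hCo.measurableSet)]
  have : Pm.real (F ⁻¹' C) ≤ (Measure.pi μ).real C + ((m : ℝ) - 1) * bmix n p Pm r := hdec
  linarith

/-- Theorem B.3, validity of the block multiplier bootstrap: for
possibly dependent, bounded, mean-zero data, if `c₁ ≤ σ̲²(q) ≤ σ̄²(q) ≤ C₁` and
`q D_n log^{5/2} p ≤ C₁ n^{1/2-c₂}`, then with probability at least
`1 - C n^{-c} - (m-1) b_r`, the conditional law (given the data) of
`max_j (mq)^{-1/2} Σ_l ε_l S_{lj}` is within `C' n^{-c'}` of the law of `max_j Y̌_j` in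
Kolmogorov distance. -/
theorem statement19 :
    ∀ c₁ C₁ c₂ : ℝ, 0 < c₁ → c₁ ≤ C₁ → 0 < c₂ → c₂ < 1 / 2 →
    ∃ c c' C C' : ℝ, 0 < c ∧ 0 < c' ∧ 0 < C ∧ 0 < C' ∧
      ∀ (n p q r : ℕ), 2 ≤ p → 1 ≤ r → r < q → 2 * (q + r) ≤ n →
      ∀ D : ℝ, 1 ≤ D →
      ∀ Pm : Measure (Fin n → Fin p → ℝ), IsProbabilityMeasure Pm →
      (∀ i j, ∫ ω, ω i j ∂Pm = 0) →
      (∀ᵐ ω ∂Pm, ∀ i j, |ω i j| ≤ D) →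
      c₁ ≤ sigmaLowSq n p Pm q →
      sigmaBarSq n p Pm q ≤ C₁ →
      (q : ℝ) * D * Real.log p ^ ((5 : ℝ) / 2) ≤ C₁ * (n : ℝ) ^ ((1 : ℝ) / 2 - c₂) →
      ∀ ν : Measure (Fin p → ℝ), IsProbabilityMeasure ν →
      (∀ a : Fin p → ℝ,
        Measure.map (fun y => ∑ j, a j * y j) ν =
          gaussianReal 0
            (Real.toNNReal (∑ j, ∑ k, a j * a k * blockCov n p q r Pm j k))) →
      1 - C * (n : ℝ) ^ (-c) - ((nBlocks n q r : ℝ) - 1) * bmix n p Pm r ≤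
        (Pm {ω | ∀ t : ℝ,
            |(gaussPi (nBlocks n q r) {e | WBMBraw n p q r ω e ≤ t}).toReal -
              (ν {y | (⨆ j, y j) ≤ t}).toReal| ≤ C' * (n : ℝ) ^ (-c')}).toReal := by
  intro c₁ C₁ c₂ hc₁ hcC hc₂ _
  obtain ⟨A, hA, hgood⟩ := good_event C₁ c₂ (hc₁.trans_le hcC) hc₂
  obtain ⟨K, hK, hks⟩ := ks_bound c₁ C₁ hc₁ hcC
  refine ⟨c₂ / 4, c₂ / 12, 1, K * (A + 1), by positivity, by positivity, one_pos, by positivity, ?_⟩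
  intro n p q r hp hr hrq hn D hD Pm hPm h0 hb hlow hup hrate ν hν hνg
  refine (hgood n p q r hp hr hrq hn D hD Pm hPm h0 hb hup hrate).trans ?_
  refine measureReal_mono (fun ω hω t => ?_) (by finiteness)
  have hω' : ∀ j k, |((nBlocks n q r * q : ℕ) : ℝ)⁻¹ *
      ∑ l : Fin (nBlocks n q r), blockVec n p q r l ω j * blockVec n p q r l ω k -
      blockCov n p q r Pm j k| ≤ A * (n : ℝ) ^ (-(c₂ / 4)) / Real.log p ^ 2 := hω
  have hq0 : 0 < q := by omega
  have hm0 : 0 < nBlocks n q r := by have := two_le_nBlocks (n := n) (q := q) hr hn; omega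
  have hn0 : (0 : ℝ) < n := by exact_mod_cast (show 0 < n by omega)
  have hD0 : 0 ≤ D := by linarith
  have hL0 : 0 < Real.log p := Real.log_pos (by exact_mod_cast (show 1 < p by omega))
  have hdiag := blockCov_diag (r := r) hb h0 hq0 hm0 hlow hup
  have : NeZero p := ⟨by omega⟩
  set N : ℝ := ((nBlocks n q r * q : ℕ) : ℝ) with hN
  have hN0 : 0 < N := by rw [hN]; exact_mod_cast Nat.mul_pos hm0 hq0
  set u : ℝ := (n : ℝ) ^ (-(c₂ / 12)) with hu
  have hu0 : 0 < u := Real.rpow_pos_of_pos hn0 _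
  have hu3 : (n : ℝ) ^ (-(c₂ / 4)) = u ^ 3 := by
    rw [hu, ← Real.rpow_natCast, ← Real.rpow_mul hn0.le]
    congr 1
    push_cast
    ring
  have hLs : 0 < Real.sqrt (Real.log p) := Real.sqrt_pos.2 hL0
  have hsup : ∀ y : Fin p → ℝ, (⨆ j, y j) ≤ t ↔ ∀ j, y j ≤ t := fun y =>
    ciSup_le_iff (Set.finite_range y).bddAbove
  -- The bootstrap statistic is the maximum of the linear map with weights `S_l / √(mq)`.
  have e1 : {e | WBMBraw n p q r ω e ≤ t} =
      {e | ∀ j, lin (fun l j => blockVec n p q r l ω j / Real.sqrt N) e j ≤ t} := by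
    ext e
    show WBMBraw n p q r ω e ≤ t ↔ _
    unfold WBMBraw
    rw [hsup]
    refine forall_congr' fun j => ?_
    simp only [lin, Finset.sum_div, mul_div_assoc]
    rfl
  have e2 : {y : Fin p → ℝ | (⨆ j, y j) ≤ t} = {y | ∀ j, y j ≤ t} := by
    ext y
    exact hsup y
  have key := hks (nBlocks n q r) p hp (fun l j => blockVec n p q r l ω j / Real.sqrt N)
    (blockCov n p q r Pm) (blockCov_posSemidef hD0 hb) (fun j => (hdiag j).1) (fun j => (hdiag j).2)
    ν hν hνg (A * u ^ 3 / Real.log p ^ 2) (by positivity) (fun j k => ?_)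
    (u / Real.sqrt (Real.log p)) (by positivity) t
  · rw [e1, e2]
    refine key.trans (le_of_eq ?_)
    rw [div_pow, Real.sq_sqrt hL0.le]
    field_simp
  · rw [← hu3]
    refine le_trans (le_of_eq ?_) (hω' j k)
    congr 2
    rw [Finset.mul_sum]
    refine Finset.sum_congr rfl fun l _ => ?_
    rw [div_mul_div_comm, Real.mul_self_sqrt hN0.le, div_eq_inv_mul]

end ManyMoment
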